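/- arXiv:0812.0997 — 2 statements merged into one kernel-verified Lean document; each statement's English description precedes it below -/
import Mathlib

section
/- Global controllability of the single forced periodic multiparticle system (Theorem on single-force controllability): Assume Φ is admissible and generic. Then for every pair of points x̃, x̂ ∈ ℝ^{2n} there exist a time θ > 0, a measurable essentially bounded control u : [0,θ] → ℝ, and an admissible trajectory x : [0,θ] → ℝ^{2n} of the system ẋ = f(x) + u(t) g with x(0) = x̃ and x(θ) = x̂. -/
/-!
Only the feedback controls `u = c - q₀` (`c` a real constant, index `0` being the forced particle)
and their concatenations are needed. Such a feedback attaches the forced particle by a linear spring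
to the point `c`, so the closed-loop field is again Hamiltonian. Admissibility makes its energy
sublevel sets bounded: each gap `q_{k-1} - q_k` is bounded above, the gaps sum to zero around the
ring, and the spring pins down the remaining translation. Hence the closed-loop flows are complete;
they preserve volume, so by Poincaré recurrence they are nonwandering.

Reachable sets have interior points. Consider compositions of closed-loop flows as functions of the
switching times, and choose one for which the range `V` of the differential has maximal dimension.
The family of all such pairs (endpoint, range) is transported by the linearized flows and contains
the velocities, so differentiating at time `0` shows that the closed-loop fields are tangent to it
and that bracketing with them preserves tangency. The fields with both properties form a Lie
algebra. It contains `∂/∂p₀`, the difference of two closed-loop fields. If it contains `∂/∂p_k`, it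
contains the bracket `∂/∂q_k` of `∂/∂p_k` with a closed-loop field, and, modulo multiples of
`∂/∂p_k`, the bracket of `∂/∂q_k` with the field is
`Φ''(q_{k-1} - q_k) ∂/∂p_{k-1} + Φ''(q_k - q_{k+1}) ∂/∂p_{k+1}`. Iterated brackets with `∂/∂q_k`
yield all Taylor coefficients of the translates of this field along `q_k`. By analyticity the
translates themselves belong to the algebra, and as `Φ''` is neither even nor odd about the midpoint
of the two gaps, they span both `∂/∂p_{k-1}` and `∂/∂p_{k+1}`. Going around the ring gives all
coordinate directions, so `V` is everything, and the inverse function theorem provides interior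
points.

Reachable sets are dense. Let `U` be the interior of the closure of a reachable set. Since the flows
are nonwandering, `U` is invariant under them both forward and backward, and so is its frontier. The
set reached from a point of the frontier would lie inside the frontier of an open set, which has
empty interior. Thus `U` is clopen and nonempty, hence everything.

Finally, the dense set reached from the first endpoint meets the set of points that can be steered
to the second, which has interior points by time reversal.
-/

open scoped BigOperators
open MeasureTheory Filter Set

noncomputable section

/-- The state space ℝ^{2n}, with coordinates (q,p). -/
abbrev State (n : ℕ) := (Fin n → ℝ) × (Fin n → ℝ)

/-- The drift vector field of the periodic multiparticle system,
`f(q,p) = Σ p_k ∂/∂q_k + Σ (φ(q_{k-1}-q_k) - φ(q_k-q_{k+1})) ∂/∂p_k` with `φ = Φ'`,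
with cyclic indexing in `Fin n`. -/
def drift (n : ℕ) [NeZero n] (Φ : ℝ → ℝ) (x : State n) : State n :=
  (x.2, fun k => deriv Φ (x.1 (k - 1) - x.1 k) - deriv Φ (x.1 k - x.1 (k + 1)))

/-- The momentum coordinate vector `e_{p_j} = ∂/∂p_j`. -/
def ep (n : ℕ) [NeZero n] (j : Fin n) : State n := (0, Pi.single j 1)

/-- The position coordinate vector `e_{q_j} = ∂/∂q_j`. -/
def eq' (n : ℕ) [NeZero n] (j : Fin n) : State n := (Pi.single j 1, 0)

/-- `Φ` is admissible: real analytic, bounded below, and `Φ(y) → +∞` as `y → +∞`. -/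
def Admissible (Φ : ℝ → ℝ) : Prop :=
  (∀ x, AnalyticAt ℝ Φ x) ∧ BddBelow (Set.range Φ) ∧ Tendsto Φ atTop atTop

/-- `Φ` is generic: for no `b` is `Φ''` even or odd about `b`. -/
def Generic (Φ : ℝ → ℝ) : Prop :=
  ∀ b : ℝ,
    (¬ ∀ t : ℝ, deriv (deriv Φ) (b + t) = deriv (deriv Φ) (b - t)) ∧
    (¬ ∀ t : ℝ, deriv (deriv Φ) (b + t) = - deriv (deriv Φ) (b - t))

/-- Lie bracket of vector fields: `[X,Y](x) = DY(x)·X(x) − DX(x)·Y(x)`. -/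
def lieBracket {n : ℕ} (X Y : State n → State n) : State n → State n :=
  fun x => fderiv ℝ Y x (X x) - fderiv ℝ X x (Y x)

/-- Admissible trajectory of the single forced system `ẋ = f(x) + u(t) g`
(in absolutely-continuous/integral form). -/
def IsTrajectory (n : ℕ) [NeZero n] (Φ : ℝ → ℝ) (θ : ℝ) (u : ℝ → ℝ)
    (x : ℝ → State n) : Prop :=
  ContinuousOn x (Set.Icc 0 θ) ∧
  ∀ t ∈ Set.Icc 0 θ,
    x t = x 0 + ∫ s in (0:ℝ)..t, (drift n Φ (x s) + u s • ep n 0)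

open scoped Topology NNReal ContDiff Manifold

/-! ### Flows of vector fields -/

section IntegralCurves

variable {E : Type*} [NormedAddCommGroup E] [NormedSpace ℝ E]

lemma isMIntegralCurveOn_iff_isIntegralCurveOn {Y : E → E} {γ : ℝ → E} {s : Set ℝ} :
    IsMIntegralCurveOn (I := 𝓘(ℝ, E)) (M := E) γ Y s ↔ IsIntegralCurveOn γ (fun _ => Y) s := by
  refine forall₂_congr fun t _ => ?_
  have hsmul : (1 : ℝ →L[ℝ] ℝ).smulRight (Y (γ t)) =
      ContinuousLinearMap.toSpanSingleton ℝ (Y (γ t)) := by ext; simp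
  rw [hasDerivWithinAt_iff_hasFDerivWithinAt, ← hsmul]
  exact hasMFDerivWithinAt_iff_hasFDerivWithinAt

lemma isMIntegralCurve_iff_isIntegralCurve {Y : E → E} {γ : ℝ → E} :
    IsMIntegralCurve (I := 𝓘(ℝ, E)) (M := E) γ Y ↔ IsIntegralCurve γ fun _ => Y :=
  isMIntegralCurve_iff_isMIntegralCurveOn.trans
    (isMIntegralCurveOn_iff_isIntegralCurveOn.trans isIntegralCurveOn_univ)

lemma isIntegralCurveOn_Ioo_eqOn_of_contDiff {Y : E → E} (hY : ContDiff ℝ 1 Y) {γ γ' : ℝ → E}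
    {a b t₀ : ℝ} (ht₀ : t₀ ∈ Ioo a b) (hγ : IsIntegralCurveOn γ (fun _ => Y) (Ioo a b))
    (hγ' : IsIntegralCurveOn γ' (fun _ => Y) (Ioo a b)) (h : γ t₀ = γ' t₀) :
    EqOn γ γ' (Ioo a b) :=
  isMIntegralCurveOn_Ioo_eqOn_of_contMDiff_boundaryless ht₀
    (contMDiff_vectorSpace_iff_contDiff.2 hY) (isMIntegralCurveOn_iff_isIntegralCurveOn.2 hγ)
    (isMIntegralCurveOn_iff_isIntegralCurveOn.2 hγ') h

lemma isIntegralCurve_eq_of_contDiff {Y : E → E} (hY : ContDiff ℝ 1 Y) {γ γ' : ℝ → E} {t₀ : ℝ}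
    (hγ : IsIntegralCurve γ fun _ => Y) (hγ' : IsIntegralCurve γ' fun _ => Y)
    (h : γ t₀ = γ' t₀) : γ = γ' :=
  isMIntegralCurve_Ioo_eq_of_contMDiff_boundaryless (contMDiff_vectorSpace_iff_contDiff.2 hY)
    (isMIntegralCurve_iff_isIntegralCurve.2 hγ) (isMIntegralCurve_iff_isIntegralCurve.2 hγ') h

lemma integralCurve_add {Y : E → E} (hY : ContDiff ℝ 1 Y) {γ : E → ℝ → E} (h0 : ∀ z, γ z 0 = z)
    (hγ : ∀ z, IsIntegralCurve (γ z) fun _ => Y) (z : E) (s t : ℝ) :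
    γ z (s + t) = γ (γ z t) s :=
  congrFun (isIntegralCurve_eq_of_contDiff hY (t₀ := 0) ((hγ z).comp_add t) (hγ (γ z t))
    (by simp [h0])) s

lemma continuousAt_integralCurve_of_continuousAt {Y : E → E} (hY : ContDiff ℝ 1 Y)
    {γ : E → ℝ → E} (h0 : ∀ z, γ z 0 = z) (hγ : ∀ z, IsIntegralCurve (γ z) fun _ => Y) {z : E}
    {s t : ℝ} (hs : ContinuousAt ↿γ (z, s)) (hst : ContinuousAt ↿γ (γ z s, t - s)) :
    ContinuousAt ↿γ (z, t) := by
  have hrestart : ↿γ = fun w : E × ℝ => ↿γ (γ w.1 s, w.2 - s) := by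
    funext w
    simpa [Function.HasUncurry.uncurry] using integralCurve_add hY h0 hγ w.1 (w.2 - s) s
  have hs' : ContinuousAt (fun w : E × ℝ => γ w.1 s) (z, t) :=
    hs.comp_of_eq (f := fun w : E × ℝ => (w.1, s)) (by fun_prop) rfl
  rw [hrestart]
  exact hst.comp_of_eq (f := fun w : E × ℝ => (γ w.1 s, w.2 - s)) (hs'.prodMk (by fun_prop)) rfl

variable [CompleteSpace E]

lemma exists_mem_nhds_continuousOn_integralCurve {Y : E → E} (hY : ContDiff ℝ 1 Y)
    {γ : E → ℝ → E} (h0 : ∀ z, γ z 0 = z) (hγ : ∀ z, IsIntegralCurve (γ z) fun _ => Y) (z₀ : E) :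
    ∃ U ∈ 𝓝 z₀, ∃ ε > 0, ContinuousOn ↿γ (U ×ˢ Ioo (-ε) ε) := by
  obtain ⟨ε, hε, _, r, _, _, hr, hpl⟩ :=
    IsPicardLindelof.of_contDiffAt_one (hY.contDiffAt (x := z₀))
  obtain ⟨α, hα, hcont⟩ :=
    (hpl 0).exists_forall_mem_closedBall_eq_hasDerivWithinAt_continuousOn
  simp only [zero_sub, zero_add] at hα hcont
  refine ⟨_, Metric.closedBall_mem_nhds z₀ hr, ε, hε,
    (hcont.mono (prod_mono_right Ioo_subset_Icc_self)).congr fun ⟨z, t⟩ ⟨hz, ht⟩ => ?_⟩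
  have hαz : IsIntegralCurveOn (fun t => α (z, t)) (fun _ => Y) (Ioo (-ε) ε) := fun t ht =>
    ((hα z hz).2 t (Ioo_subset_Icc_self ht)).mono Ioo_subset_Icc_self
  exact isIntegralCurveOn_Ioo_eqOn_of_contDiff hY ⟨neg_lt_zero.2 hε, hε⟩
    ((hγ z).isIntegralCurveOn _) hαz ((h0 z).trans (hα z hz).1.symm) ht

lemma continuous_integralCurve {Y : E → E} (hY : ContDiff ℝ 1 Y) {γ : E → ℝ → E}
    (h0 : ∀ z, γ z 0 = z) (hγ : ∀ z, IsIntegralCurve (γ z) fun _ => Y) : Continuous ↿γ := by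
  refine continuous_iff_continuousAt.2 fun ⟨z, t⟩ => ?_
  have hlocal : ∀ t₁, ∃ N ∈ 𝓝 t₁, ∀ s ∈ N, ContinuousAt ↿γ (z, s) →
      ∀ t ∈ N, ContinuousAt ↿γ (z, t) := by
    intro t₁
    obtain ⟨U, hU, ε, hε, hcont⟩ := exists_mem_nhds_continuousOn_integralCurve hY h0 hγ (γ z t₁)
    refine ⟨γ z ⁻¹' interior U ∩ Metric.ball t₁ (ε / 2), inter_mem
      ((hγ z).continuous.continuousAt.preimage_mem_nhds (interior_mem_nhds.2 hU))
      (Metric.ball_mem_nhds _ (half_pos hε)), fun s ⟨hsU, hs⟩ hcs t ⟨_, ht⟩ => ?_⟩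
    have hts : t - s ∈ Ioo (-ε) ε := by
      rw [Metric.mem_ball, Real.dist_eq, abs_lt] at hs ht
      constructor <;> linarith
    exact continuousAt_integralCurve_of_continuousAt hY h0 hγ hcs (hcont.continuousAt
      (prod_mem_nhds (mem_interior_iff_mem_nhds.1 hsU) (isOpen_Ioo.mem_nhds hts)))
  have hclopen : IsClopen {t | ContinuousAt ↿γ (z, t)} := by
    refine ⟨⟨isOpen_iff_mem_nhds.2 fun t₁ ht₁ => ?_⟩, isOpen_iff_mem_nhds.2 fun t₁ ht₁ => ?_⟩ <;>
      obtain ⟨N, hN, h⟩ := hlocal t₁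
    · exact mem_of_superset hN fun s hs hcs => ht₁ (h s hs hcs t₁ (mem_of_mem_nhds hN))
    · exact mem_of_superset hN (h t₁ (mem_of_mem_nhds hN) ht₁)
  have hzero : ContinuousAt ↿γ (z, 0) := by
    obtain ⟨U, hU, ε, hε, hcont⟩ := exists_mem_nhds_continuousOn_integralCurve hY h0 hγ z
    exact hcont.continuousAt (prod_mem_nhds hU (Ioo_mem_nhds (neg_lt_zero.2 hε) hε))
  exact eq_univ_iff_forall.1 (hclopen.eq_univ ⟨0, hzero⟩) t

/-- `φ` is the flow of the vector field `Y`: its orbits, parametrized by time, are integral curves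
of `Y`. -/
def IsFlowOf (Y : E → E) (φ : Flow ℝ E) : Prop :=
  ∀ z, IsIntegralCurve (fun t => φ t z) fun _ => Y

lemma exists_isFlowOf {Y : E → E} (hY : ContDiff ℝ 1 Y)
    (h : ∀ z, ∃ γ : ℝ → E, γ 0 = z ∧ IsIntegralCurve γ fun _ => Y) :
    ∃ φ : Flow ℝ E, IsFlowOf Y φ := by
  choose γ h0 hγ using h
  exact ⟨{  toFun := fun t z => γ z t
            cont' := (continuous_integralCurve hY h0 hγ).comp continuous_swap
            map_add' := fun s t z => integralCurve_add hY h0 hγ z s t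
            map_zero' := h0 }, hγ⟩

end IntegralCurves

section LinearGrowth

variable {E : Type*} [NormedAddCommGroup E] [NormedSpace ℝ E] [FiniteDimensional ℝ E]

lemma exists_isIntegralCurveOn_Ioo_of_linear_growth {Y : E → E} (hY : ContDiff ℝ 1 Y) {M : ℝ}
    (hM : 0 < M) (hb : ∀ x, ‖Y x‖ ≤ M * (1 + ‖x‖)) (x : E) :
    ∃ γ : ℝ → E, γ 0 = x ∧
      IsIntegralCurveOn γ (fun _ => Y) (Ioo (-(1 / (2 * M))) (1 / (2 * M))) := by
  have hε : 0 < 1 / (2 * M) := by positivity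
  obtain ⟨K, hK⟩ := hY.contDiffOn.exists_lipschitzOnWith one_ne_zero
    (convex_closedBall x (‖x‖ + 1)) (isCompact_closedBall x (‖x‖ + 1))
  have hpl : IsPicardLindelof (fun _ => Y) (tmin := -(1 / (2 * M))) (tmax := 1 / (2 * M))
      ⟨0, by constructor <;> linarith⟩ x (⟨‖x‖ + 1, by positivity⟩ : ℝ≥0) 0
      (⟨M * (2 * ‖x‖ + 2), by positivity⟩ : ℝ≥0) K := by
    refine .of_time_independent (fun z hz => (hb z).trans ?_) hK ?_
    · have hzx : ‖z - x‖ ≤ ‖x‖ + 1 := by rw [← dist_eq_norm]; exact hz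
      have hz : ‖z‖ ≤ 2 * ‖x‖ + 1 := by linarith [norm_le_norm_add_norm_sub' z x]
      exact mul_le_mul_of_nonneg_left (by linarith) hM.le
    · simp only [sub_zero, zero_sub, neg_neg, max_self, NNReal.coe_zero]
      change M * (2 * ‖x‖ + 2) * (1 / (2 * M)) ≤ ‖x‖ + 1
      field_simp
      linarith
  obtain ⟨γ, h0, hγ⟩ := hpl.exists_eq_forall_mem_Icc_hasDerivWithinAt₀
  exact ⟨γ, h0, fun t ht => (hγ t (Ioo_subset_Icc_self ht)).mono Ioo_subset_Icc_self⟩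

lemma exists_isIntegralCurve_of_linear_growth {Y : E → E} (hY : ContDiff ℝ 1 Y) {M : ℝ}
    (hM : 0 < M) (hb : ∀ x, ‖Y x‖ ≤ M * (1 + ‖x‖)) (x : E) :
    ∃ γ : ℝ → E, γ 0 = x ∧ IsIntegralCurve γ fun _ => Y := by
  simp only [← isMIntegralCurve_iff_isIntegralCurve]
  refine exists_isMIntegralCurve_of_isMIntegralCurveOn (contMDiff_vectorSpace_iff_contDiff.2 hY)
    (ε := 1 / (2 * M)) (by positivity) (fun y => ?_) x
  simp only [isMIntegralCurveOn_iff_isIntegralCurveOn]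
  exact exists_isIntegralCurveOn_Ioo_of_linear_growth hY hM hb y

end LinearGrowth

section LinearEquation

variable {F : Type*} [NormedAddCommGroup F] [NormedSpace ℝ F]

/-- The field on extended phase space whose integral curves are the solutions of the
non-autonomous linear equation `x' = A(t) x`. -/
def suspension (A : ℝ → F →L[ℝ] F) (w : ℝ × F) : ℝ × F := (1, A w.1 w.2)

lemma contDiff_suspension {A : ℝ → F →L[ℝ] F} (hA : ContDiff ℝ 1 A) :
    ContDiff ℝ 1 (suspension A) :=
  contDiff_const.prodMk ((hA.comp contDiff_fst).clm_apply contDiff_snd)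

lemma fst_eq_of_isIntegralCurve_suspension {A : ℝ → F →L[ℝ] F} {γ : ℝ → ℝ × F}
    (hγ : IsIntegralCurve γ fun _ => suspension A) (h0 : (γ 0).1 = 0) (t : ℝ) : (γ t).1 = t := by
  have hd : ∀ t, HasDerivAt (fun t => (γ t).1 - t) 0 t := fun t => by
    simpa [suspension] using ((ContinuousLinearMap.fst ℝ ℝ F).hasFDerivAt.comp_hasDerivAt t
      (hγ t)).fun_sub (hasDerivAt_id' t)
  have := is_const_of_deriv_eq_zero (fun t => (hd t).differentiableAt) (fun t => (hd t).deriv) t 0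
  linarith

variable [FiniteDimensional ℝ F]

lemma exists_isIntegralCurve_of_hasCompactSupport {Y : F → F} (hY : ContDiff ℝ 1 Y)
    (hc : HasCompactSupport Y) (z : F) :
    ∃ γ : ℝ → F, γ 0 = z ∧ IsIntegralCurve γ fun _ => Y := by
  obtain ⟨C, hC⟩ := hY.continuous.bounded_above_of_compact_support hc
  refine exists_isIntegralCurve_of_linear_growth (M := max C 1) hY (by positivity) (fun x => ?_) z
  calc ‖Y x‖ ≤ max C 1 := (hC x).trans (le_max_left _ _)
    _ ≤ max C 1 * (1 + ‖x‖) := le_mul_of_one_le_right (by positivity) (by simp)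

lemma exists_isIntegralCurve_suspension_of_hasCompactSupport {A : ℝ → F →L[ℝ] F}
    (hA : ContDiff ℝ 1 A) (hc : HasCompactSupport A) (w : ℝ × F) :
    ∃ γ : ℝ → ℝ × F, γ 0 = w ∧ IsIntegralCurve γ fun _ => suspension A := by
  obtain ⟨K, hK⟩ := hA.continuous.bounded_above_of_compact_support hc
  have hK0 : 0 ≤ K := (norm_nonneg _).trans (hK 0)
  refine exists_isIntegralCurve_of_linear_growth (M := K + 1) (contDiff_suspension hA)
    (by positivity) (fun x => ?_) w
  have hx : ‖A x.1 x.2‖ ≤ K * ‖x‖ := (A x.1).le_of_opNorm_le_of_le (hK x.1) (norm_snd_le x)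
  refine max_le ?_ ?_
  · simp only [suspension, norm_one]
    nlinarith [norm_nonneg x]
  · simp only [suspension]
    linarith [norm_nonneg x]

lemma exists_hasDerivAt_clm_apply {A : ℝ → F →L[ℝ] F} (hA : ContDiff ℝ 1 A) (x₀ : F) :
    ∃ x : ℝ → F, x 0 = x₀ ∧ ∀ t, HasDerivAt x (A t (x t)) t := by
  obtain ⟨γ, h0, hγ⟩ :
      ∃ γ : ℝ → ℝ × F, γ 0 = (0, x₀) ∧ IsIntegralCurve γ fun _ => suspension A := by
    simp only [← isMIntegralCurve_iff_isIntegralCurve]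
    refine (exists_isMIntegralCurve_iff_exists_isMIntegralCurveOn_Ioo
      (contMDiff_vectorSpace_iff_contDiff.2 (contDiff_suspension hA)) _).2 fun a => ?_
    simp only [isMIntegralCurveOn_iff_isIntegralCurveOn]
    let χ : ContDiffBump (0 : ℝ) := ⟨|a| + 1, |a| + 2, by positivity, by linarith⟩
    obtain ⟨γ, h0, hγ⟩ := exists_isIntegralCurve_suspension_of_hasCompactSupport
      (A := fun t => χ t • A t) (χ.contDiff.smul hA) χ.hasCompactSupport.smul_right (0, x₀)
    refine ⟨γ, h0, fun t ht => ?_⟩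
    have hχ : χ t = 1 := χ.one_of_mem_closedBall <| by
      rw [Metric.mem_closedBall, Real.dist_0_eq_abs]
      exact ((abs_lt.2 ht).le.trans (le_abs_self a)).trans (le_add_of_nonneg_right zero_le_one)
    have := hγ t
    simp only [suspension, fst_eq_of_isIntegralCurve_suspension hγ (by rw [h0]) t, hχ, one_smul]
      at this ⊢
    exact this.hasDerivWithinAt
  refine ⟨fun t => (γ t).2, by simp [h0], fun t => ?_⟩
  have := (ContinuousLinearMap.snd ℝ ℝ F).hasFDerivAt.comp_hasDerivAt t (hγ t)
  simpa [suspension, fst_eq_of_isIntegralCurve_suspension hγ (by rw [h0]) t, Function.comp_def]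
    using this

end LinearEquation

section ConservedFunction

variable {E : Type*} [NormedAddCommGroup E] [NormedSpace ℝ E]

lemma integralCurve_apply_eq_of_fderiv_eq_zero {H : E → ℝ} (hH : Differentiable ℝ H) {Y : E → E}
    (hHY : ∀ z, fderiv ℝ H z (Y z) = 0) {γ : ℝ → E} (hγ : IsIntegralCurve γ fun _ => Y) (s t : ℝ) :
    H (γ s) = H (γ t) := by
  have hd : ∀ t, HasDerivAt (fun t => H (γ t)) 0 t := fun t => by
    simpa [hHY, Function.comp_def] using (hH (γ t)).hasFDerivAt.comp_hasDerivAt t (hγ t)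
  exact is_const_of_deriv_eq_zero (fun t => (hd t).differentiableAt) (fun t => (hd t).deriv) s t

lemma IsFlowOf.apply_eq_of_fderiv_eq_zero {H : E → ℝ} (hH : Differentiable ℝ H) {Y : E → E}
    {φ : Flow ℝ E} (hφ : IsFlowOf Y φ) (hHY : ∀ z, fderiv ℝ H z (Y z) = 0) (t : ℝ) (z : E) :
    H (φ t z) = H z := by
  simpa using integralCurve_apply_eq_of_fderiv_eq_zero hH hHY (hφ z) t 0

lemma exists_isFlowOf_of_fderiv_eq_zero [FiniteDimensional ℝ E] {H : E → ℝ}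
    (hH : Differentiable ℝ H) (hsub : ∀ e, Bornology.IsBounded {z | H z ≤ e}) {Y : E → E}
    (hY : ContDiff ℝ 1 Y) (hHY : ∀ z, fderiv ℝ H z (Y z) = 0) : ∃ φ : Flow ℝ E, IsFlowOf Y φ := by
  have : CompleteSpace E := FiniteDimensional.complete ℝ E
  refine exists_isFlowOf hY fun z => ?_
  obtain ⟨R, hR0, hR⟩ := (hsub (H z)).subset_closedBall_lt 0 0
  let χ : ContDiffBump (0 : E) := ⟨R, R + 1, hR0, lt_add_one R⟩
  obtain ⟨γ, h0, hγ⟩ := exists_isIntegralCurve_of_hasCompactSupport (Y := fun z => χ z • Y z)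
    (χ.contDiff.smul hY) χ.hasCompactSupport.smul_right z
  refine ⟨γ, h0, fun t => ?_⟩
  have hHγ : H (γ t) = H z := by
    rw [← h0]
    exact integralCurve_apply_eq_of_fderiv_eq_zero hH (by simp [hHY]) hγ t 0
  simpa [χ.one_of_mem_closedBall (hR hHγ.le)] using hγ t

end ConservedFunction

section Variation

variable {E : Type*} [NormedAddCommGroup E] [NormedSpace ℝ E] {Y : E → E} {φ : Flow ℝ E}

lemma IsFlowOf.reverse (hφ : IsFlowOf Y φ) : IsFlowOf (fun z => -Y z) φ.reverse := fun z t => by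
  simpa [Function.comp_def] using (hφ z (-t)).scomp t (hasDerivAt_neg t)

lemma IsFlowOf.contDiff_orbit (hφ : IsFlowOf Y φ) (hY : Continuous Y) (z : E) :
    ContDiff ℝ 1 fun t => φ t z := by
  have hderiv : deriv (fun t => φ t z) = fun t => Y (φ t z) := funext fun t => (hφ z t).deriv
  refine contDiff_one_iff_deriv.2 ⟨fun t => (hφ z t).differentiableAt, ?_⟩
  rw [hderiv]
  exact hY.comp (hφ z).continuous

variable [FiniteDimensional ℝ E]

lemma exists_flow_mem_closedBall (φ : Flow ℝ E) (z : E) (T : ℝ) :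
    ∃ R, ∀ z' ∈ Metric.closedBall z 1, ∀ t ∈ Icc 0 T, φ t z' ∈ Metric.closedBall 0 R := by
  have hcompact : IsCompact ((fun w : ℝ × E => φ w.1 w.2) '' Icc 0 T ×ˢ Metric.closedBall z 1) :=
    (isCompact_Icc.prod (isCompact_closedBall z 1)).image
      (φ.continuous continuous_fst continuous_snd)
  obtain ⟨R, hR⟩ := hcompact.isBounded.subset_closedBall 0
  exact ⟨R, fun z' hz' t ht => hR ⟨(t, z'), ⟨ht, hz'⟩, rfl⟩⟩

lemma IsFlowOf.exists_norm_sub_le (hφ : IsFlowOf Y φ) (hY : ContDiff ℝ 1 Y) (z : E) (T : ℝ) :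
    ∃ C, ∀ z₁ ∈ Metric.closedBall z 1, ∀ z₂ ∈ Metric.closedBall z 1, ∀ t ∈ Icc 0 T,
      ‖φ t z₁ - φ t z₂‖ ≤ C * ‖z₁ - z₂‖ := by
  obtain ⟨R, hR⟩ := exists_flow_mem_closedBall φ z T
  obtain ⟨K, hK⟩ := hY.contDiffOn.exists_lipschitzOnWith one_ne_zero
    (convex_closedBall 0 R) (isCompact_closedBall 0 R)
  refine ⟨Real.exp (K * T), fun z₁ hz₁ z₂ hz₂ t ht => ?_⟩
  have hgronwall := dist_le_of_trajectories_ODE_of_mem (v := fun _ => Y)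
    (s := fun _ => Metric.closedBall 0 R) (δ := ‖z₁ - z₂‖) (fun _ _ => hK)
    (hφ z₁).continuous.continuousOn (fun t _ => (hφ z₁ t).hasDerivWithinAt)
    (fun t ht => hR z₁ hz₁ t (Ico_subset_Icc_self ht))
    (hφ z₂).continuous.continuousOn (fun t _ => (hφ z₂ t).hasDerivWithinAt)
    (fun t ht => hR z₂ hz₂ t (Ico_subset_Icc_self ht)) (by simp [dist_eq_norm]) t ht
  rw [dist_eq_norm, sub_zero, mul_comm] at hgronwall
  refine hgronwall.trans ?_
  gcongr
  exact ht.2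

lemma exists_norm_sub_sub_fderiv_le {F : Type*} [NormedAddCommGroup F] [NormedSpace ℝ F]
    {f : E → F} (hf : ContDiff ℝ 2 f) (R : ℝ) :
    ∃ M, 0 ≤ M ∧ ∀ a ∈ Metric.closedBall 0 R, ∀ b ∈ Metric.closedBall 0 R,
      ‖f b - f a - fderiv ℝ f a (b - a)‖ ≤ M * ‖b - a‖ ^ 2 := by
  obtain ⟨K, hK⟩ := (hf.fderiv_right (m := 1) le_rfl).contDiffOn.exists_lipschitzOnWith one_ne_zero
    (convex_closedBall (0 : E) R) (isCompact_closedBall 0 R)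
  refine ⟨K, K.2, fun a ha b hb => ?_⟩
  have h := Convex.norm_image_sub_le_of_norm_fderiv_le' (𝕜 := ℝ) (φ := fderiv ℝ f a)
    (C := K * ‖b - a‖) (s := Metric.closedBall 0 R ∩ Metric.closedBall a ‖b - a‖)
    (fun x _ => hf.differentiable two_ne_zero x) (fun x hx => ?_)
    ((convex_closedBall _ _).inter (convex_closedBall _ _))
    ⟨ha, Metric.mem_closedBall_self (norm_nonneg _)⟩ ⟨hb, by simp [dist_eq_norm]⟩
  · exact h.trans_eq (by ring)
  · refine (hK.norm_sub_le hx.1 ha).trans ?_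
    gcongr
    simpa [dist_eq_norm] using hx.2

lemma gronwallBound_zero_eq_mul (K ε x : ℝ) :
    gronwallBound 0 K ε x = ε * gronwallBound 0 K 1 x := by
  unfold gronwallBound
  split_ifs <;> ring

lemma IsFlowOf.exists_norm_sub_sub_variation_le (hφ : IsFlowOf Y φ) (hY : ContDiff ℝ 2 Y) {z : E}
    {L : ℝ → E →L[ℝ] E} (hL0 : L 0 = .id ℝ E)
    (hL : ∀ t, HasDerivAt L (fderiv ℝ Y (φ t z) ∘L L t) t) {T : ℝ} (hT : 0 ≤ T) :
    ∃ C, ∀ z' ∈ Metric.closedBall z 1,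
      ‖φ T z' - φ T z - L T (z' - z)‖ ≤ C * ‖z' - z‖ ^ 2 := by
  obtain ⟨R, hR⟩ := exists_flow_mem_closedBall φ z T
  obtain ⟨C, hC⟩ := hφ.exists_norm_sub_le (hY.of_le one_le_two) z T
  obtain ⟨M, hM0, hM⟩ := exists_norm_sub_sub_fderiv_le hY R
  obtain ⟨K, hK⟩ := isCompact_Icc.exists_bound_of_continuousOn (s := Icc 0 T)
    ((hY.continuous_fderiv two_ne_zero).comp (hφ z).continuous).continuousOn
  have hz : z ∈ Metric.closedBall z 1 := Metric.mem_closedBall_self zero_le_one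
  refine ⟨M * C ^ 2 * gronwallBound 0 K 1 T, fun z' hz' => ?_⟩
  have hderiv : ∀ t, HasDerivAt (fun t => φ t z' - φ t z - L t (z' - z))
      (Y (φ t z') - Y (φ t z) - fderiv ℝ Y (φ t z) (L t (z' - z))) t := fun t =>
    ((hφ z' t).sub (hφ z t)).sub (by simpa using (hL t).clm_apply (hasDerivAt_const t (z' - z)))
  have hgronwall := norm_le_gronwallBound_of_norm_deriv_right_le (a := 0) (b := T) (δ := 0)
    (K := K) (ε := M * (C * ‖z' - z‖) ^ 2)
    (fun t _ => (hderiv t).continuousAt.continuousWithinAt)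
    (fun t _ => (hderiv t).hasDerivWithinAt) (by simp [hL0]) (fun t ht => ?_) T ⟨hT, le_rfl⟩
  · rw [sub_zero, gronwallBound_zero_eq_mul] at hgronwall
    exact hgronwall.trans_eq (by ring)
  · have ht' := Ico_subset_Icc_self ht
    calc ‖Y (φ t z') - Y (φ t z) - fderiv ℝ Y (φ t z) (L t (z' - z))‖
        = ‖fderiv ℝ Y (φ t z) (φ t z' - φ t z - L t (z' - z)) +
            (Y (φ t z') - Y (φ t z) - fderiv ℝ Y (φ t z) (φ t z' - φ t z))‖ := by
          simp only [map_sub]; congr 1; abel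
      _ ≤ K * ‖φ t z' - φ t z - L t (z' - z)‖ + M * (C * ‖z' - z‖) ^ 2 := by
          refine (norm_add_le _ _).trans (add_le_add ?_ ?_)
          · exact (fderiv ℝ Y (φ t z)).le_of_opNorm_le (hK t ht') _
          · refine (hM _ (hR z hz t ht') _ (hR z' hz' t ht')).trans ?_
            gcongr
            exact hC z' hz' z hz t ht'

lemma IsFlowOf.hasFDerivAt_of_variation_of_nonneg (hφ : IsFlowOf Y φ) (hY : ContDiff ℝ 2 Y) {z : E}
    {L : ℝ → E →L[ℝ] E} (hL0 : L 0 = .id ℝ E)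
    (hL : ∀ t, HasDerivAt L (fderiv ℝ Y (φ t z) ∘L L t) t) {T : ℝ} (hT : 0 ≤ T) :
    HasFDerivAt (φ T) (L T) z := by
  obtain ⟨C, hC⟩ := hφ.exists_norm_sub_sub_variation_le hY hL0 hL hT
  have hbigO : (fun z' => φ T z' - φ T z - L T (z' - z)) =O[𝓝 z] fun z' => ‖z' - z‖ ^ 2 :=
    .of_bound C <| by
      filter_upwards [Metric.closedBall_mem_nhds z one_pos] with z' hz'
      simpa using hC z' hz'
  have := ((hbigO.hasFDerivAt one_lt_two).add ((L T).hasFDerivAt.comp z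
    ((hasFDerivAt_id z).sub_const z))).add_const (φ T z)
  simpa [Function.comp_def] using this

lemma IsFlowOf.hasFDerivAt_of_variation (hφ : IsFlowOf Y φ) (hY : ContDiff ℝ 2 Y) {z : E}
    {L : ℝ → E →L[ℝ] E} (hL0 : L 0 = .id ℝ E)
    (hL : ∀ t, HasDerivAt L (fderiv ℝ Y (φ t z) ∘L L t) t) (t : ℝ) :
    HasFDerivAt (φ t) (L t) z := by
  rcases le_total 0 t with ht | ht
  · exact hφ.hasFDerivAt_of_variation_of_nonneg hY hL0 hL ht
  · have hrev := hφ.reverse.hasFDerivAt_of_variation_of_nonneg hY.neg (z := z)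
      (L := fun t => L (-t)) (by simpa using hL0) (fun t => ?_) (neg_nonneg.2 ht)
    · rw [neg_neg] at hrev
      exact hrev.congr_of_eventuallyEq (.of_forall fun _ => by simp)
    · simpa [Function.comp_def, fderiv_fun_neg] using (hL (-t)).scomp t (hasDerivAt_neg t)

/-- The tangent lift of a vector field, whose second component solves the variational equation
`A' = DY(z) A` along the integral curves `z` of the first. -/
def tangentLift (Y : E → E) (w : E × (E →L[ℝ] E)) : E × (E →L[ℝ] E) :=
  (Y w.1, fderiv ℝ Y w.1 ∘L w.2)

lemma IsFlowOf.exists_variation (hφ : IsFlowOf Y φ) (hY : ContDiff ℝ 2 Y) :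
    ∃ L : E → ℝ → E →L[ℝ] E, Continuous ↿L ∧ ∀ z, L z 0 = .id ℝ E ∧
      ∀ t, HasDerivAt (L z) (fderiv ℝ Y (φ t z) ∘L L z t) t := by
  have : CompleteSpace E := FiniteDimensional.complete ℝ E
  have hDY : ContDiff ℝ 1 (fderiv ℝ Y) := hY.fderiv_right le_rfl
  have hY1 : ContDiff ℝ 1 Y := hY.of_le one_le_two
  have hcurve (z : E) (A : E →L[ℝ] E) : ∃ L : ℝ → E →L[ℝ] E, L 0 = A ∧
      ∀ t, HasDerivAt L (fderiv ℝ Y (φ t z) ∘L L t) t :=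
    exists_hasDerivAt_clm_apply (A := fun t => .compL ℝ E E E (fderiv ℝ Y (φ t z)))
      ((ContinuousLinearMap.contDiff _).comp (hDY.comp (hφ.contDiff_orbit hY.continuous z))) A
  choose L hL0 hL using hcurve
  let γ : E × (E →L[ℝ] E) → ℝ → E × (E →L[ℝ] E) := fun w t => (φ t w.1, L w.1 w.2 t)
  have hγ : Continuous ↿γ := continuous_integralCurve (Y := tangentLift Y)
    ((hY1.comp contDiff_fst).prodMk ((hDY.comp contDiff_fst).clm_comp contDiff_snd))
    (fun w => Prod.ext (by simp [γ]) (hL0 _ _)) (fun w t => (hφ w.1 t).prodMk (hL w.1 w.2 t))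
  refine ⟨fun z => L z (.id ℝ E), ?_, fun z => ⟨hL0 _ _, hL _ _⟩⟩
  exact continuous_snd.comp
    (hγ.comp (g := ↿γ) (f := fun w : E × ℝ => ((w.1, .id ℝ E), w.2)) (by fun_prop))

lemma IsFlowOf.differentiable (hφ : IsFlowOf Y φ) (hY : ContDiff ℝ 2 Y) (t : ℝ) :
    Differentiable ℝ (φ t) := fun z => by
  obtain ⟨L, -, hL⟩ := hφ.exists_variation hY
  exact (hφ.hasFDerivAt_of_variation hY (hL z).1 (hL z).2 t).differentiableAt

lemma IsFlowOf.hasDerivAt_fderiv (hφ : IsFlowOf Y φ) (hY : ContDiff ℝ 2 Y) (t : ℝ) (z : E) :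
    HasDerivAt (fun t => fderiv ℝ (φ t) z) (fderiv ℝ Y (φ t z) ∘L fderiv ℝ (φ t) z) t := by
  obtain ⟨L, -, hL⟩ := hφ.exists_variation hY
  have hLφ : ∀ t, fderiv ℝ (φ t) z = L z t := fun t =>
    (hφ.hasFDerivAt_of_variation hY (hL z).1 (hL z).2 t).fderiv
  simpa only [hLφ] using (hL z).2 t

lemma IsFlowOf.continuous_fderiv (hφ : IsFlowOf Y φ) (hY : ContDiff ℝ 2 Y) :
    Continuous fun w : E × ℝ => fderiv ℝ (φ w.2) w.1 := by
  obtain ⟨L, hLcont, hL⟩ := hφ.exists_variation hY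
  have hLφ : ∀ w : E × ℝ, fderiv ℝ (φ w.2) w.1 = L w.1 w.2 := fun w =>
    (hφ.hasFDerivAt_of_variation hY (hL w.1).1 (hL w.1).2 w.2).fderiv
  simp only [hLφ]
  exact hLcont

lemma IsFlowOf.hasStrictFDerivAt (hφ : IsFlowOf Y φ) (hY : ContDiff ℝ 2 Y) (t : ℝ) (z : E) :
    HasStrictFDerivAt (fun w : E × ℝ => φ w.2 w.1)
      ((fderiv ℝ (φ t) z).coprod (.toSpanSingleton ℝ (Y (φ t z)))) (z, t) := by
  refine hasStrictFDerivAt_uncurry_coprod (u := (z, t)) (f := fun z t => φ t z)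
    (f₁ := fun z t => fderiv ℝ (φ t) z) (f₂ := fun z t => .toSpanSingleton ℝ (Y (φ t z)))
    (.of_forall fun w => (hφ.differentiable hY w.2 w.1).hasFDerivAt)
    (.of_forall fun w => (hφ w.1 w.2).hasFDerivAt)
    (hφ.continuous_fderiv hY).continuousAt (Continuous.continuousAt ?_)
  exact (ContinuousLinearMap.toSpanSingletonCLE (𝕜 := ℝ)).continuous.comp
    (hY.continuous.comp (φ.continuous continuous_snd continuous_fst))

end Variation

/-! ### Hamiltonian vector fields -/

section Hamiltonian

variable {E : Type*} [NormedAddCommGroup E] [NormedSpace ℝ E]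

/-- `Y` is the Hamiltonian vector field of `H` with respect to the form `B`, with the sign
convention `ι_Y B = dH`. -/
def IsHamiltonian (B : LinearMap.BilinForm ℝ E) (H : E → ℝ) (Y : E → E) : Prop :=
  ∀ z w, B (Y z) w = fderiv ℝ H z w

variable {B : LinearMap.BilinForm ℝ E} {H : E → ℝ} {Y : E → E}

lemma IsHamiltonian.fderiv_apply_self (h : IsHamiltonian B H Y) (hB : B.IsAlt) (z : E) :
    fderiv ℝ H z (Y z) = 0 := by
  rw [← h z (Y z), hB]

variable [FiniteDimensional ℝ E]

lemma IsHamiltonian.apply_fderiv_comm (h : IsHamiltonian B H Y) (hH : Differentiable ℝ H)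
    {z : E} (hY : DifferentiableAt ℝ Y z) (v w : E) :
    B (fderiv ℝ Y z v) w = B (fderiv ℝ Y z w) v := by
  have hdH : fderiv ℝ H = fun z => B.toContinuousBilinearMap (Y z) :=
    funext fun z => ContinuousLinearMap.ext fun w => (h z w).symm
  have hd2H : HasFDerivAt (fderiv ℝ H) (B.toContinuousBilinearMap ∘L fderiv ℝ Y z) z := by
    rw [hdH]
    exact B.toContinuousBilinearMap.hasFDerivAt.comp z hY.hasFDerivAt
  exact second_derivative_symmetric (fun z => (hH z).hasFDerivAt) hd2H v w

lemma IsHamiltonian.apply_fderiv_flow (h : IsHamiltonian B H Y) (hB : B.IsAlt)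
    (hH : Differentiable ℝ H) (hY : ContDiff ℝ 2 Y) {φ : Flow ℝ E} (hφ : IsFlowOf Y φ) (t : ℝ)
    (z v w : E) : B (fderiv ℝ (φ t) z v) (fderiv ℝ (φ t) z w) = B v w := by
  have hL (t : ℝ) (v : E) : HasDerivAt (fun t => fderiv ℝ (φ t) z v)
      (fderiv ℝ Y (φ t z) (fderiv ℝ (φ t) z v)) t := by
    simpa using (hφ.hasDerivAt_fderiv hY t z).clm_apply (hasDerivAt_const t v)
  have hd (t : ℝ) : HasDerivAt
      (fun t => B.toContinuousBilinearMap (fderiv ℝ (φ t) z v) (fderiv ℝ (φ t) z w)) 0 t := by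
    refine ((B.toContinuousBilinearMap.hasFDerivAt.comp_hasDerivAt t (hL t v)).clm_apply
      (hL t w)).congr_deriv ?_
    change B (fderiv ℝ Y (φ t z) (fderiv ℝ (φ t) z v)) (fderiv ℝ (φ t) z w) +
      B (fderiv ℝ (φ t) z v) (fderiv ℝ Y (φ t z) (fderiv ℝ (φ t) z w)) = 0
    rw [h.apply_fderiv_comm hH (hY.differentiable two_ne_zero _), ← hB.neg_eq (fderiv ℝ (φ t) z v),
      neg_add_cancel]
  have hconst := is_const_of_deriv_eq_zero (fun t => (hd t).differentiableAt)
    (fun t => (hd t).deriv) t 0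
  have hφ0 : φ 0 = id := φ.map_zero
  simpa [hφ0] using hconst

lemma abs_det_eq_one_of_apply_apply_eq (hB : B.Nondegenerate) {L : E →ₗ[ℝ] E}
    (hL : ∀ v w, B (L v) (L w) = B v w) : |LinearMap.det L| = 1 := by
  let b := Module.finBasis ℝ E
  have hmatrix := congrArg Matrix.det (LinearMap.BilinForm.toMatrix_comp b b (B := B) L L)
  rw [show B.comp L L = B from LinearMap.ext₂ hL, Matrix.det_mul, Matrix.det_mul,
    Matrix.det_transpose, LinearMap.det_toMatrix] at hmatrix
  have hdet : LinearMap.det L ^ 2 = 1 :=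
    mul_left_cancel₀ ((LinearMap.BilinForm.nondegenerate_iff_det_ne_zero b).1 hB)
      (by linear_combination -hmatrix)
  rwa [← pow_eq_one_iff_of_nonneg (abs_nonneg _) two_ne_zero, sq_abs]

lemma measurePreserving_flow_of_abs_det_fderiv [MeasurableSpace E] [BorelSpace E]
    (μ : Measure E) [μ.IsAddHaarMeasure] {φ : Flow ℝ E} (hφ : ∀ t, Differentiable ℝ (φ t))
    (hdet : ∀ t z, |(fderiv ℝ (φ t) z).det| = 1) (t : ℝ) : MeasurePreserving (φ t) μ μ := by
  refine ⟨(hφ t).continuous.measurable, Measure.ext fun s hs => ?_⟩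
  have himage : φ t ⁻¹' s = φ (-t) '' s := by rw [φ.image_eq_preimage_symm, neg_neg]
  rw [Measure.map_apply (hφ t).continuous.measurable hs, himage,
    ← lintegral_abs_det_fderiv_eq_addHaar_image μ hs
      (fun z _ => (hφ (-t) z).hasFDerivAt.hasFDerivWithinAt)
      (φ.toHomeomorph (-t)).injective.injOn]
  simp [hdet]

/-- Liouville's theorem. -/
lemma IsHamiltonian.measurePreserving_flow [MeasurableSpace E] [BorelSpace E] (μ : Measure E)
    [μ.IsAddHaarMeasure] (h : IsHamiltonian B H Y) (hB : B.IsAlt) (hB' : B.Nondegenerate)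
    (hH : Differentiable ℝ H) (hY : ContDiff ℝ 2 Y) {φ : Flow ℝ E} (hφ : IsFlowOf Y φ) (t : ℝ) :
    MeasurePreserving (φ t) μ μ :=
  measurePreserving_flow_of_abs_det_fderiv μ (hφ.differentiable hY)
    (fun t z => abs_det_eq_one_of_apply_apply_eq hB' (h.apply_fderiv_flow hB hH hY hφ t z)) t

end Hamiltonian

/-! ### Nonwandering flows and reachable sets -/

section Nonwandering

variable {α : Type*} [TopologicalSpace α] {f : α → α}

/-- Every point is nonwandering for `f`: each nonempty open set meets itself under some positive
iterate. -/
def IsNonwandering (f : α → α) : Prop :=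
  ∀ U : Set α, IsOpen U → U.Nonempty → ∃ x ∈ U, ∃ m ≠ 0, f^[m] x ∈ U

lemma isNonwandering_of_measurePreserving [MeasurableSpace α] [BorelSpace α] {μ : Measure α}
    [μ.IsOpenPosMeasure] (hf : MeasurePreserving f μ μ) {H : α → ℝ} (hH : Continuous H)
    (hfin : ∀ e, μ {x | H x ≤ e} < ⊤) (hfH : ∀ x, H (f x) = H x) : IsNonwandering f := by
  rintro U hU ⟨x₀, hx₀⟩
  let S := {x | H x ≤ H x₀ + 1}
  have : Fact (μ S < ⊤) := ⟨hfin _⟩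
  have hpres : MeasurePreserving f (μ.restrict S) (μ.restrict S) := by
    have h := hf.restrict_preimage (s := S) (measurableSet_le hH.measurable measurable_const)
    rwa [show f ⁻¹' S = S from Set.ext fun x => by simp [S, hfH]] at h
  have hpos : μ.restrict S U ≠ 0 := by
    have hV : IsOpen (U ∩ {x | H x < H x₀ + 1}) := hU.inter (isOpen_lt hH continuous_const)
    rw [Measure.restrict_apply hU.measurableSet]
    have hVS : U ∩ {x | H x < H x₀ + 1} ⊆ U ∩ S :=
      inter_subset_inter_right U fun x (hx : H x < H x₀ + 1) => hx.le
    exact (measure_mono_null hVS).mt (hV.measure_ne_zero μ ⟨x₀, hx₀, by simp⟩)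
  exact hpres.exists_mem_iterate_mem hU.measurableSet.nullMeasurableSet hpos

lemma IsNonwandering.preimage_interior_subset (hf : IsNonwandering f) (hcont : Continuous f)
    {C : Set α} (hC : IsClosed C) (hmaps : MapsTo f C C) : f ⁻¹' interior C ⊆ C := by
  intro x hx
  by_contra hxC
  obtain ⟨y, hy, m, hm, hmy⟩ := hf (Cᶜ ∩ f ⁻¹' interior C)
    (hC.isOpen_compl.inter (isOpen_interior.preimage hcont)) ⟨x, hxC, hx⟩
  obtain ⟨k, rfl⟩ := Nat.exists_eq_succ_of_ne_zero hm
  exact hmy.1 (hmaps.iterate k (interior_subset hy.2))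

end Nonwandering

section Reachable

variable {ι α : Type*} [TopologicalSpace α] {φ : ι → Flow ℝ α} {x y : α}

/-- `y` is reached from `x` by following finitely many of the flows `φ i`, each forward in time. -/
def Reachable (φ : ι → Flow ℝ α) : α → α → Prop :=
  Relation.ReflTransGen fun x y => ∃ i, ∃ t > 0, φ i t x = y

lemma Reachable.flow (h : Reachable φ x y) (i : ι) {t : ℝ} (ht : 0 < t) :
    Reachable φ x (φ i t y) :=
  h.tail ⟨i, t, ht, rfl⟩

lemma reachable_reverse_iff : Reachable (fun i => (φ i).reverse) x y ↔ Reachable φ y x := by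
  have hstep (i : ι) (t : ℝ) (x y : α) : (φ i).reverse t x = y ↔ φ i t y = x :=
    ((φ i).toHomeomorph t).toEquiv.symm_apply_eq.trans eq_comm
  simp only [Reachable, hstep]
  exact Relation.reflTransGen_swap

lemma Reachable.mem_of_mapsTo {S : Set α} (hS : ∀ i, ∀ t > 0, MapsTo (φ i t) S S)
    (h : Reachable φ x y) (hx : x ∈ S) : y ∈ S := by
  induction h with
  | refl => exact hx
  | tail _ hyz ih =>
    obtain ⟨i, t, ht, rfl⟩ := hyz
    exact hS i t ht ih

lemma interior_closure_reachable_invariant (i : ι) {t : ℝ} (ht : 0 < t)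
    (hnw : IsNonwandering (φ i t)) (x : α) :
    φ i t ⁻¹' interior (closure {y | Reachable φ x y}) =
      interior (closure {y | Reachable φ x y}) := by
  have hcont : Continuous (φ i t) := (φ i).continuous_toFun t
  have hmaps : MapsTo (φ i t) (closure {y | Reachable φ x y}) (closure {y | Reachable φ x y}) :=
    MapsTo.closure (fun y (hy : Reachable φ x y) => hy.flow i ht) hcont
  refine Subset.antisymm (interior_maximal ?_ (isOpen_interior.preimage hcont)) ?_
  · exact hnw.preimage_interior_subset hcont isClosed_closure hmaps
  · exact image_subset_iff.1 (interior_maximal (image_subset_iff.2 fun y hy =>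
      hmaps (interior_subset hy)) (((φ i).toHomeomorph t).isOpenMap _ isOpen_interior))

lemma dense_reachable [PreconnectedSpace α] (hnw : ∀ i, ∀ t > 0, IsNonwandering (φ i t))
    (hint : ∀ x, (interior {y | Reachable φ x y}).Nonempty) (x : α) :
    Dense {y | Reachable φ x y} := by
  set U := interior (closure {y | Reachable φ x y})
  have hinv : ∀ i, ∀ t > 0, φ i t ⁻¹' U = U := fun i t ht =>
    interior_closure_reachable_invariant i ht (hnw i t ht) x
  have hfrontier : frontier U = ∅ := by
    rw [eq_empty_iff_forall_notMem]
    intro z hz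
    have hsub : {y | Reachable φ z y} ⊆ frontier U := fun y hy =>
      hy.mem_of_mapsTo (fun i t ht => by
        have := ((φ i).toHomeomorph t).preimage_frontier U
        exact (this.trans (congrArg frontier (hinv i t ht))).ge) hz
    have := (hint z).mono (interior_mono hsub)
    rw [← frontier_compl, interior_frontier isOpen_interior.isClosed_compl] at this
    exact this.ne_empty rfl
  have huniv : U = univ := (isClopen_iff_frontier_eq_empty.2 hfrontier).eq_univ
    ((hint x).mono (interior_mono subset_closure))
  exact dense_iff_closure_eq.2 (univ_subset_iff.1 (huniv.ge.trans interior_subset))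

theorem reachable_of_interior_nonempty [PreconnectedSpace α]
    (hnw : ∀ i, ∀ t > 0, IsNonwandering (φ i t))
    (hforward : ∀ x, (interior {y | Reachable φ x y}).Nonempty)
    (hbackward : ∀ y, (interior {x | Reachable φ x y}).Nonempty) (x y : α) :
    Reachable φ x y := by
  obtain ⟨z, hz, hxz⟩ := (dense_reachable hnw hforward x).inter_open_nonempty _ isOpen_interior
    (hbackward y)
  have hzy : z ∈ {x | Reachable φ x y} := interior_subset hz
  exact hxz.trans hzy

end Reachable

/-! ### The Lie derivative -/

section LieDerivative

variable {E : Type*} [NormedAddCommGroup E] [NormedSpace ℝ E] [FiniteDimensional ℝ E]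
  {Y W : E → E} {φ : Flow ℝ E}

lemma IsFlowOf.isInvertible_fderiv (hφ : IsFlowOf Y φ) (hY : ContDiff ℝ 2 Y) (t : ℝ) (z : E) :
    (fderiv ℝ (φ t) z).IsInvertible := by
  have hid (s t : ℝ) (hst : s + t = 0) (z : E) :
      fderiv ℝ (φ s) (φ t z) ∘L fderiv ℝ (φ t) z = .id ℝ E := by
    have h := ((hφ.differentiable hY s _).hasFDerivAt.comp z
      (hφ.differentiable hY t z).hasFDerivAt)
    have hcomp : φ s ∘ φ t = id := funext fun z => by
      simp [← Flow.map_add, hst]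
    exact (hcomp ▸ h).unique (hasFDerivAt_id z)
  refine .of_inverse (g := fderiv ℝ (φ (-t)) (φ t z)) ?_ (hid _ _ (neg_add_cancel t) z)
  simpa [← Flow.map_add] using hid t (-t) (add_neg_cancel t) (φ t z)

lemma IsFlowOf.hasDerivAt_pullback (hφ : IsFlowOf Y φ) (hY : ContDiff ℝ 2 Y) {z : E}
    (hW : DifferentiableAt ℝ W z) :
    HasDerivAt (fun t => VectorField.pullback ℝ (φ t) W z) (VectorField.lieBracket ℝ Y W z) 0 := by
  have h0 : φ 0 = id := funext φ.map_zero_apply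
  have hinv : HasDerivAt (fun t => (fderiv ℝ (φ t) z).inverse) (-fderiv ℝ Y z) 0 := by
    have hbase := hasFDerivAt_ringInverse (𝕜 := ℝ) (1 : (E →L[ℝ] E)ˣ)
    rw [ContinuousLinearMap.ringInverse_eq_inverse, Units.val_one,
      show (1 : E →L[ℝ] E) = fderiv ℝ (φ 0) z by rw [h0, fderiv_id]; rfl] at hbase
    refine (hbase.comp_hasDerivAt 0 (hφ.hasDerivAt_fderiv hY 0 z)).congr_deriv ?_
    ext v
    simp [h0]
  have hWφ : HasDerivAt (fun t => W (φ t z)) (fderiv ℝ W z (Y z)) 0 := by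
    have hW' : HasFDerivAt W (fderiv ℝ W z) (φ 0 z) := by simpa [h0] using hW.hasFDerivAt
    simpa [h0, Function.comp_def] using hW'.comp_hasDerivAt 0 (hφ z 0)
  refine (hinv.clm_apply hWφ).congr_deriv ?_
  simp [h0, VectorField.lieBracket, neg_add_eq_sub]

lemma IsFlowOf.mem_and_lieBracket_mem (hφ : IsFlowOf Y φ) (hY : ContDiff ℝ 2 Y) {z : E}
    (hW : DifferentiableAt ℝ W z) {V : Submodule ℝ E}
    (hV : ∀ t > 0, W (φ t z) ∈ V.map (fderiv ℝ (φ t) z : E →ₗ[ℝ] E)) :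
    W z ∈ V ∧ VectorField.lieBracket ℝ Y W z ∈ V := by
  have hclosed : IsClosed (V : Set E) := V.closed_of_finiteDimensional
  set γ := fun t => VectorField.pullback ℝ (φ t) W z
  have hγ : HasDerivAt γ (VectorField.lieBracket ℝ Y W z) 0 := hφ.hasDerivAt_pullback hY hW
  have hγV : ∀ᶠ t in 𝓝[>] (0 : ℝ), γ t ∈ V := by
    filter_upwards [self_mem_nhdsWithin] with t ht
    obtain ⟨v, hv, hvW⟩ := hV t ht
    rwa [show γ t = v from
      ((hφ.isInvertible_fderiv hY t z).inverse_apply_eq).2 hvW.symm]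
  have hγ0 : γ 0 ∈ V :=
    hclosed.mem_of_tendsto (hγ.continuousAt.tendsto.mono_left nhdsWithin_le_nhds) hγV
  refine ⟨?_, hclosed.mem_of_tendsto hγ.tendsto_slope_zero_right ?_⟩
  · simpa [γ, VectorField.pullback, show φ 0 = id from funext φ.map_zero_apply] using hγ0
  · filter_upwards [hγV] with t ht
    simpa using V.smul_mem t⁻¹ (V.sub_mem ht hγ0)

end LieDerivative

/-! ### Vector fields tangent to a family of subspaces -/

section AnalyticCurve

variable {E : Type*} [NormedAddCommGroup E] [NormedSpace ℝ E] [CompleteSpace E]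

lemma eq_zero_of_iteratedDeriv_eq_zero {g : ℝ → E} (hg : ContDiff ℝ ω g)
    (h0 : ∀ j, iteratedDeriv j g 0 = 0) : g = 0 := by
  have hg' : AnalyticOnNhd ℝ g univ := contDiff_omega_iff_analyticOnNhd.1 hg
  refine hg'.eq_of_eventuallyEq analyticOnNhd_const
    (analyticOrderAt_eq_top.1 (?_ : analyticOrderAt g 0 = ⊤))
  exact ENat.eq_top_iff_forall_ge.2 fun j =>
    (natCast_le_analyticOrderAt_iff_iteratedDeriv_eq_zero (hg' 0 (mem_univ 0))).2 fun i _ => h0 i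

lemma mem_of_hasDerivAt_succ {V : Submodule ℝ E} (hV : IsClosed (V : Set E)) {g : ℕ → ℝ → E}
    (hg : ContDiff ℝ ω (g 0)) (hderiv : ∀ j s, HasDerivAt (g j) (g (j + 1) s) s)
    (h0 : ∀ j, g j 0 ∈ V) (s : ℝ) : g 0 s ∈ V := by
  have : IsClosed (V : Set E) := hV
  let π : E →L[ℝ] E ⧸ V := V.mkQL
  have hπ : ∀ j, iteratedDeriv j (π ∘ g 0) = π ∘ g j := by
    intro j
    induction j with
    | zero => rfl
    | succ j ih =>
      rw [iteratedDeriv_succ, ih]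
      exact funext fun s => (π.hasFDerivAt.comp_hasDerivAt s (hderiv j s)).deriv
  have hzero : π ∘ g 0 = 0 := eq_zero_of_iteratedDeriv_eq_zero (π.contDiff.comp hg) fun j => by
    rw [hπ]
    exact (Submodule.Quotient.mk_eq_zero V).2 (h0 j)
  exact (Submodule.Quotient.mk_eq_zero V).1 (congrFun hzero s)

end AnalyticCurve

section LieTangent

variable {E : Type*} [NormedAddCommGroup E] [NormedSpace ℝ E]
  {Q : E → Submodule ℝ E → Prop} {X Y W : E → E} {e : E}

lemma lieBracket_const_left : VectorField.lieBracket ℝ (fun _ => e) X = fun z => fderiv ℝ X z e :=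
  funext fun z => by simp [VectorField.lieBracket]

lemma hasDerivAt_lieBracket_translate (hX : ContDiff ℝ 2 X) (z : E) (s : ℝ) :
    HasDerivAt (fun s : ℝ => VectorField.lieBracket ℝ (fun w => X (w + s • e)) W z)
      (VectorField.lieBracket ℝ
        (fun w => VectorField.lieBracket ℝ (fun _ => e) X (w + s • e)) W z) s := by
  have hX' : Differentiable ℝ (fderiv ℝ X) :=
    (hX.fderiv_right (m := 1) le_rfl).differentiable one_ne_zero
  have hline : HasDerivAt (fun s : ℝ => z + s • e) e s := by
    simpa using ((hasDerivAt_id s).smul_const e).const_add z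
  have h1 := (hX.differentiable two_ne_zero _).hasFDerivAt.comp_hasDerivAt s hline
  have h2 := ((hX' _).hasFDerivAt.comp_hasDerivAt s hline).clm_apply
    (hasDerivAt_const s (W z))
  have hsymm := (hX.contDiffAt (x := z + s • e)).isSymmSndFDerivAt (by simp) e (W z)
  have hfderiv : fderiv ℝ (fun w => fderiv ℝ X (w + s • e) e) z (W z) =
      fderiv ℝ (fderiv ℝ X) (z + s • e) (W z) e := by
    rw [fderiv_comp_add_right (f := fun w => fderiv ℝ X w e),
      fderiv_clm_apply (hX' _) (differentiableAt_const e)]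
    simp
  simp only [VectorField.lieBracket, fderiv_comp_add_right]
  refine (((fderiv ℝ W z).hasFDerivAt.comp_hasDerivAt s h1).sub h2).congr_deriv ?_
  simp [hfderiv, hsymm]

/-- The vector field `X` takes its values in the subspaces that `Q` attaches to points. -/
def IsTangentTo (Q : E → Submodule ℝ E → Prop) (X : E → E) : Prop :=
  ∀ ⦃z V⦄, Q z V → X z ∈ V

/-- The vector field `X` is analytic, tangent to `Q`, and normalizes the analytic fields tangent
to `Q`. The latter need not be closed under brackets since the family `Q` is arbitrary; the fields
with this stronger property are. -/
structure IsLieTangent (Q : E → Submodule ℝ E → Prop) (X : E → E) : Prop where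
  contDiff : ContDiff ℝ ω X
  isTangentTo : IsTangentTo Q X
  lieBracket_isTangentTo : ∀ ⦃W⦄, ContDiff ℝ ω W → IsTangentTo Q W →
    IsTangentTo Q (VectorField.lieBracket ℝ X W)

lemma IsLieTangent.add (hX : IsLieTangent Q X) (hY : IsLieTangent Q Y) :
    IsLieTangent Q (X + Y) where
  contDiff := hX.contDiff.add hY.contDiff
  isTangentTo _ V hV := V.add_mem (hX.isTangentTo hV) (hY.isTangentTo hV)
  lieBracket_isTangentTo W hW hWQ z V hV := by
    rw [VectorField.lieBracket_add_left (hX.contDiff.differentiable (by simp) z)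
      (hY.contDiff.differentiable (by simp) z)]
    exact V.add_mem (hX.lieBracket_isTangentTo hW hWQ hV) (hY.lieBracket_isTangentTo hW hWQ hV)

lemma IsLieTangent.smul {f : E → ℝ} (hf : ContDiff ℝ ω f) (hX : IsLieTangent Q X) :
    IsLieTangent Q fun z => f z • X z where
  contDiff := hf.smul hX.contDiff
  isTangentTo _ V hV := V.smul_mem _ (hX.isTangentTo hV)
  lieBracket_isTangentTo W hW hWQ z V hV := by
    rw [VectorField.lieBracket_smul_left (hf.differentiable (by simp) z)
      (hX.contDiff.differentiable (by simp) z)]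
    exact V.add_mem (V.smul_mem _ (hX.isTangentTo hV))
      (V.smul_mem _ (hX.lieBracket_isTangentTo hW hWQ hV))

lemma IsLieTangent.neg (hX : IsLieTangent Q X) : IsLieTangent Q (-X) := by
  simpa using! hX.smul (f := fun _ => -1) contDiff_const

lemma IsLieTangent.sub (hX : IsLieTangent Q X) (hY : IsLieTangent Q Y) :
    IsLieTangent Q (X - Y) :=
  sub_eq_add_neg X Y ▸ hX.add hY.neg

lemma IsLieTangent.lieBracket (hX : IsLieTangent Q X) (hY : IsLieTangent Q Y) :
    IsLieTangent Q (VectorField.lieBracket ℝ X Y) where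
  contDiff := hX.contDiff.lieBracket_vectorField hY.contDiff (by simp)
  isTangentTo := hX.lieBracket_isTangentTo hY.contDiff hY.isTangentTo
  lieBracket_isTangentTo W hW hWQ z V hV := by
    have hXY := hX.lieBracket_isTangentTo
      (hY.contDiff.lieBracket_vectorField hW (m := ω) (by simp))
      (hY.lieBracket_isTangentTo hW hWQ) hV
    have hYX := hY.lieBracket_isTangentTo
      (hX.contDiff.lieBracket_vectorField hW (m := ω) (by simp))
      (hX.lieBracket_isTangentTo hW hWQ) hV
    rw [VectorField.leibniz_identity_lieBracket (n := ω) (by simp) hX.contDiff.contDiffAt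
      hY.contDiff.contDiffAt hW.contDiffAt] at hXY
    exact (V.add_mem_iff_left hYX).1 hXY

/-- The Lie algebra rank condition, formulated through the families of subspaces to which the
fields are tangent, so that passages to the limit and multiplication by analytic functions are
allowed along with brackets. -/
def IsBracketGenerating {ι : Type*} (F : ι → E → E) : Prop :=
  ∀ Q : E → Submodule ℝ E → Prop, (∀ i, IsLieTangent Q (F i)) → ∀ ⦃z V⦄, Q z V → V = ⊤

lemma IsBracketGenerating.neg {ι : Type*} {F : ι → E → E} (hF : IsBracketGenerating F) :
    IsBracketGenerating fun i => -F i := fun Q hQ =>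
  hF Q fun i => neg_neg (F i) ▸ (hQ i).neg

end LieTangent

section Translation

variable {E : Type*} [NormedAddCommGroup E] [NormedSpace ℝ E] [FiniteDimensional ℝ E]
  {Q : E → Submodule ℝ E → Prop} {X : E → E} {e : E}

/-- The iterated brackets of `X` with `e` are the Taylor coefficients of its translates. -/
lemma IsLieTangent.translate (he : IsLieTangent Q fun _ => e) (hX : IsLieTangent Q X) (s : ℝ) :
    IsLieTangent Q fun z => X (z + s • e) := by
  let D (j : ℕ) : E → E := (VectorField.lieBracket ℝ fun _ => e)^[j] X
  have hD (j : ℕ) : IsLieTangent Q (D j) :=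
    Function.Iterate.rec (IsLieTangent Q) hX (fun _ h => he.lieBracket h) j
  have hDsucc (j : ℕ) : D (j + 1) = VectorField.lieBracket ℝ (fun _ => e) (D j) :=
    Function.iterate_succ_apply' _ j X
  have hline (z : E) : ContDiff ℝ ω fun s : ℝ => z + s • e := by fun_prop
  refine ⟨hX.contDiff.comp (contDiff_id.add contDiff_const), fun z V hV => ?_,
    fun W hW hWQ z V hV => ?_⟩
  · refine mem_of_hasDerivAt_succ V.closed_of_finiteDimensional (g := fun j s => D j (z + s • e))
      (hX.contDiff.comp (hline z)) (fun j s => ?_) (fun j => ?_) s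
    · have h : HasDerivAt (fun s : ℝ => z + s • e) e s := by
        simpa using ((hasDerivAt_id s).smul_const e).const_add z
      simpa [hDsucc, lieBracket_const_left, Function.comp_def] using
        ((hD j).contDiff.differentiable (by simp) _).hasFDerivAt.comp_hasDerivAt s h
    · simpa using (hD j).isTangentTo hV
  · refine mem_of_hasDerivAt_succ V.closed_of_finiteDimensional
      (g := fun j s => VectorField.lieBracket ℝ (fun w => D j (w + s • e)) W z) ?_
      (fun j s => ?_) (fun j => ?_) s
    · simp only [VectorField.lieBracket, fderiv_comp_add_right]
      exact ((fderiv ℝ W z).contDiff.comp (hX.contDiff.comp (hline z))).sub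
        (((hX.contDiff.fderiv_right (m := ω) (by simp)).comp (hline z)).clm_apply contDiff_const)
    · simpa only [hDsucc] using
        hasDerivAt_lieBracket_translate ((hD j).contDiff.of_le (by simp)) z s
    · simpa using (hD j).lieBracket_isTangentTo hW hWQ hV

end Translation

/-! ### Attainable tangent spaces and controllability -/

section Attainable

variable {E ι : Type*} [NormedAddCommGroup E] [NormedSpace ℝ E] {F : ι → E → E}
  {φ : ι → Flow ℝ E} {x z : E} {V : Submodule ℝ E}

/-- `V` is the range at `z` of the derivative of a differentiable family of points reachable from
`x`. The parameters `P` will be switching times between the flows. -/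
def AttainableTangent (φ : ι → Flow ℝ E) (x z : E) (V : Submodule ℝ E) : Prop :=
  ∃ (P : Type) (_ : NormedAddCommGroup P) (_ : NormedSpace ℝ P) (_ : CompleteSpace P)
    (G : P → E) (G' : P →L[ℝ] E) (s : P), HasStrictFDerivAt G G' s ∧ G s = z ∧
      (G' : P →ₗ[ℝ] E).range = V ∧ ∀ᶠ s' in 𝓝 s, Reachable φ x (G s')

lemma AttainableTangent.refl (φ : ι → Flow ℝ E) (x : E) : AttainableTangent φ x x ⊥ :=
  ⟨ℝ, inferInstance, inferInstance, inferInstance, fun _ => x, 0, 0, hasStrictFDerivAt_const _ _,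
    rfl, LinearMap.range_zero, .of_forall fun _ => Relation.ReflTransGen.refl⟩

lemma AttainableTangent.interior_nonempty [CompleteSpace E] (h : AttainableTangent φ x z ⊤) :
    (interior {y | Reachable φ x y}).Nonempty := by
  obtain ⟨P, _, _, _, G, G', s, hG, -, hrange, hreach⟩ := h
  refine ⟨G s, ?_⟩
  rw [mem_interior_iff_mem_nhds, ← hG.map_nhds_eq_of_surj hrange]
  exact hreach

variable [FiniteDimensional ℝ E]

lemma AttainableTangent.flow (hφ : ∀ i, IsFlowOf (F i) (φ i)) (hF : ∀ i, ContDiff ℝ 2 (F i))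
    (h : AttainableTangent φ x z V) (i : ι) {t : ℝ} (ht : 0 < t) :
    AttainableTangent φ x (φ i t z)
      (V.map (fderiv ℝ (φ i t) z : E →ₗ[ℝ] E) ⊔ ℝ ∙ F i (φ i t z)) := by
  obtain ⟨P, _, _, _, G, G', s, hG, rfl, rfl, hreach⟩ := h
  have hpair : HasStrictFDerivAt (fun w : P × ℝ => (G w.1, w.2))
      ((G' ∘L .fst ℝ P ℝ).prod (.snd ℝ P ℝ)) (s, t) :=
    (hG.comp (s, t) hasStrictFDerivAt_fst).prodMk hasStrictFDerivAt_snd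
  refine ⟨P × ℝ, inferInstance, inferInstance, inferInstance, fun w => φ i w.2 (G w.1), _, (s, t),
    ((hφ i).hasStrictFDerivAt (hF i) t (G s)).comp (s, t) hpair, rfl, ?_, ?_⟩
  · rw [← LinearMap.range_comp, ← LinearMap.range_toSpanSingleton, ← LinearMap.range_coprod]
    congr 1
  · filter_upwards [(continuous_fst.tendsto (s, t)).eventually hreach,
      (continuous_snd.tendsto (s, t)).eventually (lt_mem_nhds ht)] with w hw ht'
    exact hw.flow i ht'

/-- `V` is an attainable tangent space of maximal dimension. -/
def MaximalAttainableTangent (φ : ι → Flow ℝ E) (x z : E) (V : Submodule ℝ E) : Prop :=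
  AttainableTangent φ x z V ∧
    ∀ ⦃z' V'⦄, AttainableTangent φ x z' V' → Module.finrank ℝ V' ≤ Module.finrank ℝ V

lemma exists_maximalAttainableTangent (φ : ι → Flow ℝ E) (x : E) :
    ∃ z V, MaximalAttainableTangent φ x z V := by
  let dims : Set ℕ := {r | ∃ z V, AttainableTangent φ x z V ∧ Module.finrank ℝ V = r}
  have hne : dims.Nonempty := ⟨_, x, ⊥, .refl φ x, rfl⟩
  have hbdd : BddAbove dims := by
    refine ⟨Module.finrank ℝ E, ?_⟩
    rintro _ ⟨_, V, -, rfl⟩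
    exact V.finrank_le
  obtain ⟨z, V, hV, hVmax⟩ := Nat.sSup_mem hne hbdd
  exact ⟨z, V, hV, fun z' V' hV' => hVmax ▸ le_csSup hbdd ⟨z', V', hV', rfl⟩⟩

lemma MaximalAttainableTangent.flow (hφ : ∀ i, IsFlowOf (F i) (φ i))
    (hF : ∀ i, ContDiff ℝ 2 (F i)) (h : MaximalAttainableTangent φ x z V) (i : ι) {t : ℝ}
    (ht : 0 < t) :
    MaximalAttainableTangent φ x (φ i t z) (V.map (fderiv ℝ (φ i t) z : E →ₗ[ℝ] E)) ∧
      F i (φ i t z) ∈ V.map (fderiv ℝ (φ i t) z : E →ₗ[ℝ] E) := by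
  set V₁ := V.map (fderiv ℝ (φ i t) z : E →ₗ[ℝ] E)
  have hflow := h.1.flow hφ hF i ht
  have hdim : Module.finrank ℝ V₁ = Module.finrank ℝ V :=
    (Submodule.equivMapOfInjective _
      ((hφ i).isInvertible_fderiv (hF i) t z).injective V).symm.finrank_eq
  have heq : V₁ = V₁ ⊔ ℝ ∙ F i (φ i t z) :=
    Submodule.eq_of_le_of_finrank_le le_sup_left (hdim ▸ h.2 hflow)
  refine ⟨⟨heq ▸ hflow, fun z' V' hV' => hdim ▸ h.2 hV'⟩, ?_⟩
  rw [heq]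
  exact Submodule.mem_sup_right (Submodule.mem_span_singleton_self _)

lemma isLieTangent_maximalAttainableTangent (hφ : ∀ i, IsFlowOf (F i) (φ i))
    (hF : ∀ i, ContDiff ℝ ω (F i)) (x : E) (i : ι) :
    IsLieTangent (MaximalAttainableTangent φ x) (F i) := by
  have hF₂ (i : ι) : ContDiff ℝ 2 (F i) := (hF i).of_le (by simp)
  refine ⟨hF i, fun z V hV => ?_, fun W hW hWQ z V hV => ?_⟩
  · exact ((hφ i).mem_and_lieBracket_mem (hF₂ i) ((hF i).differentiable (by simp) z)
      fun t ht => (hV.flow hφ hF₂ i ht).2).1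
  · exact ((hφ i).mem_and_lieBracket_mem (hF₂ i) (hW.differentiable (by simp) z)
      fun t ht => hWQ (hV.flow hφ hF₂ i ht).1).2

lemma IsBracketGenerating.interior_reachable_nonempty (hgen : IsBracketGenerating F)
    (hφ : ∀ i, IsFlowOf (F i) (φ i)) (hF : ∀ i, ContDiff ℝ ω (F i)) (x : E) :
    (interior {y | Reachable φ x y}).Nonempty := by
  obtain ⟨z, V, hV⟩ := exists_maximalAttainableTangent φ x
  have htop : V = ⊤ := hgen _ (isLieTangent_maximalAttainableTangent hφ hF x) hV
  have := FiniteDimensional.complete ℝ E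
  exact (htop ▸ hV.1).interior_nonempty

/-- Reversing time turns the points that can be steered to `y` into a reachable set. -/
theorem IsBracketGenerating.reachable (hgen : IsBracketGenerating F)
    (hφ : ∀ i, IsFlowOf (F i) (φ i)) (hF : ∀ i, ContDiff ℝ ω (F i))
    (hnw : ∀ i, ∀ t > 0, IsNonwandering (φ i t)) (x y : E) : Reachable φ x y := by
  refine reachable_of_interior_nonempty hnw (hgen.interior_reachable_nonempty hφ hF)
    (fun y => ?_) x y
  simpa only [reachable_reverse_iff] using
    hgen.neg.interior_reachable_nonempty (fun i => (hφ i).reverse) (fun i => (hF i).neg) y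

end Attainable

section HamiltonianFamily

variable {E ι : Type*} [NormedAddCommGroup E] [NormedSpace ℝ E] [FiniteDimensional ℝ E]
  {B : LinearMap.BilinForm ℝ E}

lemma IsHamiltonian.exists_isFlowOf_isNonwandering {H : E → ℝ} {Y : E → E}
    (h : IsHamiltonian B H Y) (hB : B.IsAlt) (hB' : B.Nondegenerate) (hH : Differentiable ℝ H)
    (hsub : ∀ e, Bornology.IsBounded {z | H z ≤ e}) (hY : ContDiff ℝ 2 Y) :
    ∃ φ : Flow ℝ E, IsFlowOf Y φ ∧ ∀ t, IsNonwandering (φ t) := by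
  have hHY := h.fderiv_apply_self hB
  obtain ⟨φ, hφ⟩ := exists_isFlowOf_of_fderiv_eq_zero hH hsub (hY.of_le one_le_two) hHY
  let _ : MeasurableSpace E := borel E
  have : BorelSpace E := ⟨rfl⟩
  let μ : Measure E := Measure.addHaar
  exact ⟨φ, hφ, fun t => isNonwandering_of_measurePreserving
    (h.measurePreserving_flow μ hB hB' hH hY hφ t) hH.continuous
    (fun e => (hsub e).measure_lt_top) fun z => hφ.apply_eq_of_fderiv_eq_zero hH hHY t z⟩

theorem IsBracketGenerating.exists_reachable_of_isHamiltonian {H : ι → E → ℝ} {F : ι → E → E}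
    (hgen : IsBracketGenerating F) (hF : ∀ i, ContDiff ℝ ω (F i)) (hB : B.IsAlt)
    (hB' : B.Nondegenerate) (hH : ∀ i, Differentiable ℝ (H i))
    (hsub : ∀ i e, Bornology.IsBounded {z | H i z ≤ e}) (hFH : ∀ i, IsHamiltonian B (H i) (F i)) :
    ∃ φ : ι → Flow ℝ E, (∀ i, IsFlowOf (F i) (φ i)) ∧ ∀ x y, Reachable φ x y := by
  choose φ hφ hnw using fun i => (hFH i).exists_isFlowOf_isNonwandering hB hB' (hH i) (hsub i)
    ((hF i).of_le (by simp))
  exact ⟨φ, hφ, hgen.reachable hφ hF fun i t _ => hnw i t⟩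

end HamiltonianFamily

/-! ### Separation by reflection asymmetry -/

section ReflectionAsymmetry

/-- `ψ` is neither even nor odd about any point. -/
def IsReflectionAsymmetric (ψ : ℝ → ℝ) : Prop :=
  ∀ b : ℝ, (¬ ∀ t : ℝ, ψ (b + t) = ψ (b - t)) ∧ ¬ ∀ t : ℝ, ψ (b + t) = -ψ (b - t)

section Module

variable {E : Type*} [AddCommGroup E] [Module ℝ E] {V : Submodule ℝ E} {ψ : ℝ → ℝ} {x y : E}
  {b : ℝ}

lemma sub_mem_of_forall_smul_add_smul_mem (hψ : ¬ ∀ t, ψ (b + t) = ψ (b - t))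
    (h : ∀ t, ψ (b - t) • x + ψ (b + t) • y ∈ V) : x - y ∈ V := by
  obtain ⟨t, ht⟩ := not_forall.1 hψ
  refine (V.smul_mem_iff (sub_ne_zero.2 ht)).1 ?_
  convert! V.sub_mem (h (-t)) (h t) using 1
  rw [sub_neg_eq_add, ← sub_eq_add_neg]
  module

lemma add_mem_of_forall_smul_add_smul_mem (hψ : ¬ ∀ t, ψ (b + t) = -ψ (b - t))
    (h : ∀ t, ψ (b - t) • x + ψ (b + t) • y ∈ V) : x + y ∈ V := by
  obtain ⟨t, ht⟩ := not_forall.1 hψ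
  refine (V.smul_mem_iff fun h0 => ht (eq_neg_of_add_eq_zero_left h0)).1 ?_
  convert! V.add_mem (h (-t)) (h t) using 1
  rw [sub_neg_eq_add, ← sub_eq_add_neg]
  module

/-- Symmetrize about the midpoint of `y₀` and `y₁`. -/
lemma IsReflectionAsymmetric.mem_and_mem (hψ : IsReflectionAsymmetric ψ) {y₀ y₁ : ℝ}
    (h : ∀ s, ψ (y₀ - s) • x + ψ (y₁ + s) • y ∈ V) : x ∈ V ∧ y ∈ V := by
  have hmid (t : ℝ) : ψ ((y₀ + y₁) / 2 - t) • x + ψ ((y₀ + y₁) / 2 + t) • y ∈ V := by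
    convert h (t + (y₀ - y₁) / 2) using 4 <;> ring
  have hsub := sub_mem_of_forall_smul_add_smul_mem (hψ _).1 hmid
  have hadd := add_mem_of_forall_smul_add_smul_mem (hψ _).2 hmid
  have hx : x = (1 / 2 : ℝ) • ((x + y) + (x - y)) := by module
  have hy : y = (1 / 2 : ℝ) • ((x + y) - (x - y)) := by module
  exact ⟨hx ▸ V.smul_mem _ (V.add_mem hadd hsub), hy ▸ V.smul_mem _ (V.sub_mem hadd hsub)⟩

end Module

variable {E : Type*} [NormedAddCommGroup E] [NormedSpace ℝ E] {Q : E → Submodule ℝ E → Prop}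
  {ψ : ℝ → ℝ} {f g : E → ℝ} {a b : E} {W : E → E} {z : E}

lemma lieBracket_smul_const_add_smul_const (hf : DifferentiableAt ℝ f z)
    (hg : DifferentiableAt ℝ g z) :
    VectorField.lieBracket ℝ (fun z => f z • a + g z • b) W z =
      f z • VectorField.lieBracket ℝ (fun _ => a) W z +
        g z • VectorField.lieBracket ℝ (fun _ => b) W z -
      (fderiv ℝ f z (W z) • a + fderiv ℝ g z (W z) • b) := by
  have ha := VectorField.lieBracket_smul_left (W := W) hf (differentiableAt_const a)
  have hb := VectorField.lieBracket_smul_left (W := W) hg (differentiableAt_const b)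
  refine (VectorField.lieBracket_add_left (hf.smul_const a) (hg.smul_const b)).trans ?_
  rw [ha, hb]
  module

variable [FiniteDimensional ℝ E] {l m : E →L[ℝ] ℝ} {e : E}

lemma IsLieTangent.of_smul_add_smul (hψ : ContDiff ℝ ω ψ) (hasym : IsReflectionAsymmetric ψ)
    (hl : l e = -1) (hm : m e = 1) (he : IsLieTangent Q fun _ => e)
    (h : IsLieTangent Q fun z => ψ (l z) • a + ψ (m z) • b) :
    IsLieTangent Q (fun _ => a) ∧ IsLieTangent Q fun _ => b := by
  have htranslate (s : ℝ) : IsLieTangent Q fun z => ψ (l z - s) • a + ψ (m z + s) • b := by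
    simpa [hl, hm, ← sub_eq_add_neg] using he.translate h s
  have hmem ⦃z V⦄ (hV : Q z V) : a ∈ V ∧ b ∈ V :=
    hasym.mem_and_mem fun s => (htranslate s).isTangentTo hV
  have hbracket ⦃W⦄ (hW : ContDiff ℝ ω W) (hWQ : IsTangentTo Q W) ⦃z V⦄ (hV : Q z V) :
      VectorField.lieBracket ℝ (fun _ => a) W z ∈ V ∧
        VectorField.lieBracket ℝ (fun _ => b) W z ∈ V := by
    refine hasym.mem_and_mem (y₀ := l z) (y₁ := m z) fun s => ?_
    have hψ' : Differentiable ℝ ψ := hψ.differentiable (by simp)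
    have hs := (htranslate s).lieBracket_isTangentTo hW hWQ hV
    rw [lieBracket_smul_const_add_smul_const (by fun_prop) (by fun_prop)] at hs
    exact (V.sub_mem_iff_left (V.add_mem (V.smul_mem _ (hmem hV).1)
      (V.smul_mem _ (hmem hV).2))).1 hs
  exact ⟨⟨contDiff_const, fun _ _ hV => (hmem hV).1, fun _ hW hWQ _ _ hV => (hbracket hW hWQ hV).1⟩,
    ⟨contDiff_const, fun _ _ hV => (hmem hV).2, fun _ hW hWQ _ _ hV => (hbracket hW hWQ hV).2⟩⟩

end ReflectionAsymmetry

/-! ### The standard symplectic form -/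

section Symplectic

variable {n : ℕ}

/-- The standard symplectic form `∑ dq_k ∧ dp_k` on the state space. -/
def symplecticForm (n : ℕ) : LinearMap.BilinForm ℝ (State n) :=
  (dotProductBilin ℝ ℝ).compl₁₂ (LinearMap.fst ℝ _ _) (LinearMap.snd ℝ _ _) -
    (dotProductBilin ℝ ℝ).compl₁₂ (LinearMap.snd ℝ _ _) (LinearMap.fst ℝ _ _)

lemma symplecticForm_apply (z w : State n) : symplecticForm n z w = z.1 ⬝ᵥ w.2 - z.2 ⬝ᵥ w.1 :=
  rfl

lemma isAlt_symplecticForm : (symplecticForm n).IsAlt := fun z => by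
  rw [symplecticForm_apply, dotProduct_comm, sub_self]

lemma nondegenerate_symplecticForm : (symplecticForm n).Nondegenerate := by
  refine (isAlt_symplecticForm.isRefl.nondegenerate_iff_separatingLeft).2 fun z hz => ?_
  refine Prod.ext (dotProduct_eq_zero _ fun v => ?_) (dotProduct_eq_zero _ fun v => ?_)
  · simpa [symplecticForm_apply] using hz (0, v)
  · simpa [symplecticForm_apply] using hz (v, 0)

end Symplectic

/-! ### The ring of particles with a spring -/

section Ring

open scoped Fin.CommRing in
lemma sub_le_of_forall_gap_le {n : ℕ} [NeZero n] {q : Fin n → ℝ} {M : ℝ} (hM : 0 ≤ M)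
    (hq : ∀ k, q (k - 1) - q k ≤ M) (j k : Fin n) : q j - q k ≤ n * M := by
  have harc (i : ℕ) : q j - q (j + i) ≤ i * M := by
    induction i with
    | zero => simp
    | succ i ih =>
      have hgap := hq (j + (i + 1 : ℕ))
      have hprev : j + ((i + 1 : ℕ) : Fin n) - 1 = j + i := by push_cast; ring
      rw [hprev] at hgap
      push_cast at hgap ⊢
      linarith
  calc q j - q k = q j - q (j + ((k - j).val : Fin n)) := by simp
    _ ≤ (k - j).val * M := harc _
    _ ≤ n * M := by gcongr; exact (k - j).isLt.le

variable {n : ℕ} [NeZero n] {Φ : ℝ → ℝ}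

/-- The closed-loop field obtained from the feedback control `u = c - q₀`: the forced particle is
additionally attached by a linear spring to the point `c`. -/
def springField (n : ℕ) [NeZero n] (Φ : ℝ → ℝ) (c : ℝ) (z : State n) : State n :=
  drift n Φ z + (c - z.1 0) • ep n 0

/-- The energy of the ring of particles together with the spring attached to the point `c`; it is
the Hamiltonian of `springField n Φ c`. -/
def springEnergy (n : ℕ) [NeZero n] (Φ : ℝ → ℝ) (c : ℝ) (z : State n) : ℝ :=
  ∑ k, z.2 k ^ 2 / 2 + ∑ k, Φ (z.1 (k - 1) - z.1 k) + (z.1 0 - c) ^ 2 / 2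

section Energy

lemma terms_le_of_springEnergy_le {m : ℝ} (hm : ∀ y, m ≤ Φ y) {c e : ℝ} {z : State n}
    (hz : springEnergy n Φ c z ≤ e) :
    (∀ k, z.2 k ^ 2 / 2 ≤ e - n * m) ∧ (∀ k, Φ (z.1 (k - 1) - z.1 k) - m ≤ e - n * m) ∧
      (z.1 0 - c) ^ 2 / 2 ≤ e - n * m := by
  have hsplit : springEnergy n Φ c z - n * m =
      ∑ k, z.2 k ^ 2 / 2 + ∑ k, (Φ (z.1 (k - 1) - z.1 k) - m) + (z.1 0 - c) ^ 2 / 2 := by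
    simp only [springEnergy, Finset.sum_sub_distrib, Finset.sum_const, Finset.card_univ,
      Fintype.card_fin, nsmul_eq_mul]
    ring
  have hkin (k : Fin n) : 0 ≤ z.2 k ^ 2 / 2 := by positivity
  have hpot (k : Fin n) : 0 ≤ Φ (z.1 (k - 1) - z.1 k) - m := sub_nonneg.2 (hm _)
  have hspring : 0 ≤ (z.1 0 - c) ^ 2 / 2 := by positivity
  have hkin' := Finset.sum_nonneg fun k (_ : k ∈ Finset.univ) => hkin k
  have hpot' := Finset.sum_nonneg fun k (_ : k ∈ Finset.univ) => hpot k
  refine ⟨fun k => ?_, fun k => ?_, by linarith⟩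
  · linarith [Finset.single_le_sum (fun k _ => hkin k) (Finset.mem_univ k)]
  · linarith [Finset.single_le_sum (fun k _ => hpot k) (Finset.mem_univ k)]

lemma isBounded_springEnergy_le (hbdd : BddBelow (range Φ)) (htop : Tendsto Φ atTop atTop)
    (c e : ℝ) : Bornology.IsBounded {z | springEnergy n Φ c z ≤ e} := by
  obtain ⟨m, hm⟩ := hbdd
  replace hm (y : ℝ) : m ≤ Φ y := hm (mem_range_self y)
  let N := e - n * m
  obtain ⟨M₀, hM₀⟩ := eventually_atTop.1 (htop.eventually_gt_atTop (N + m))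
  let M := max M₀ 0
  refine isBounded_iff_forall_norm_le.2 ⟨N + 1 + |c| + n * M, fun z hz => ?_⟩
  obtain ⟨hkin, hpot, hspring⟩ := terms_le_of_springEnergy_le hm hz
  have hN : 0 ≤ N := le_trans (by positivity) hspring
  have habs {x : ℝ} (hx : x ^ 2 / 2 ≤ N) : |x| ≤ N + 1 := by
    nlinarith [sq_nonneg (|x| - 1), sq_abs x]
  have hgap (k : Fin n) : z.1 (k - 1) - z.1 k ≤ M := by
    by_contra! h
    linarith [hM₀ _ ((le_max_left _ _).trans h.le), hpot k]
  refine max_le ((pi_norm_le_iff_of_nonneg (by positivity)).2 fun k => ?_)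
    ((pi_norm_le_iff_of_nonneg (by positivity)).2 fun k => ?_)
  · have hdist : |z.1 k - z.1 0| ≤ n * M :=
      abs_sub_le_iff.2 ⟨sub_le_of_forall_gap_le (le_max_right _ _) hgap k 0,
        sub_le_of_forall_gap_le (le_max_right _ _) hgap 0 k⟩
    calc |z.1 k| = |(z.1 0 - c) + c + (z.1 k - z.1 0)| := by ring_nf
      _ ≤ |z.1 0 - c| + |c| + |z.1 k - z.1 0| := abs_add_three _ _ _
      _ ≤ N + 1 + |c| + n * M := by gcongr; exact habs hspring
  · rw [add_assoc]
    exact (habs (hkin k)).trans (le_add_of_nonneg_right (by positivity))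

lemma dotProduct_sub_cyclic_by_parts (a b : Fin n → ℝ) :
    (b ⬝ᵥ fun k => a (k - 1) - a k) = -((fun k => b k - b (k + 1)) ⬝ᵥ a) := by
  have hshift : ∑ k, b k * a (k - 1) = ∑ k, b (k + 1) * a k := by
    rw [← Equiv.sum_comp (Equiv.addRight 1) fun k => b k * a (k - 1)]
    simp
  simp only [dotProduct, mul_sub, sub_mul, Finset.sum_sub_distrib, hshift, neg_sub]

lemma springField_snd (c : ℝ) (z : State n) : (springField n Φ c z).2 =
    (fun k => deriv Φ (z.1 (k - 1) - z.1 k) - deriv Φ (z.1 k - z.1 (k + 1))) +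
      Pi.single 0 (c - z.1 0) := by
  rw [← mul_one (c - z.1 0), ← smul_eq_mul, Pi.single_smul]
  rfl

lemma differentiable_springEnergy (hΦ : Differentiable ℝ Φ) (c : ℝ) :
    Differentiable ℝ (springEnergy n Φ c) := by
  unfold springEnergy
  fun_prop

lemma fderiv_springEnergy (hΦ : Differentiable ℝ Φ) (c : ℝ) (z w : State n) :
    fderiv ℝ (springEnergy n Φ c) z w =
      z.2 ⬝ᵥ w.2 + ((fun k => deriv Φ (z.1 (k - 1) - z.1 k)) ⬝ᵥ fun k => w.1 (k - 1) - w.1 k) +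
        (z.1 0 - c) * w.1 0 := by
  rw [← (differentiable_springEnergy hΦ c z).lineDeriv_eq_fderiv]
  refine HasLineDerivAt.lineDeriv ?_
  have hcoord (a b : ℝ) : HasDerivAt (fun t : ℝ => a + t * b) b 0 := by
    simpa using ((hasDerivAt_id' (0 : ℝ)).mul_const b).const_add a
  have hkin (k : Fin n) : HasDerivAt (fun t : ℝ => (z.2 k + t * w.2 k) ^ 2 / 2)
      (z.2 k * w.2 k) 0 :=
    (((hcoord _ _).fun_pow 2).div_const 2).congr_deriv (by simp; ring)
  have hpot (k : Fin n) :
      HasDerivAt (fun t : ℝ => Φ ((z.1 (k - 1) + t * w.1 (k - 1)) - (z.1 k + t * w.1 k)))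
        (deriv Φ (z.1 (k - 1) - z.1 k) * (w.1 (k - 1) - w.1 k)) 0 :=
    HasDerivAt.comp (h₂ := Φ) 0 (by simpa using (hΦ (z.1 (k - 1) - z.1 k)).hasDerivAt)
      ((hcoord _ _).fun_sub (hcoord _ _))
  have hspring : HasDerivAt (fun t : ℝ => (z.1 0 + t * w.1 0 - c) ^ 2 / 2)
      ((z.1 0 - c) * w.1 0) 0 :=
    ((((hcoord _ _).sub_const c).fun_pow 2).div_const 2).congr_deriv (by simp; ring)
  exact ((HasDerivAt.fun_sum fun k _ => hkin k).fun_add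
    (HasDerivAt.fun_sum fun k _ => hpot k)).fun_add hspring

lemma isHamiltonian_springField (hΦ : Differentiable ℝ Φ) (c : ℝ) :
    IsHamiltonian (symplecticForm n) (springEnergy n Φ c) (springField n Φ c) := fun z w => by
  have hparts := dotProduct_sub_cyclic_by_parts w.1 fun k => deriv Φ (z.1 (k - 1) - z.1 k)
  simp only [add_sub_cancel_right] at hparts
  have hfst : (springField n Φ c z).1 = z.2 := by simp [springField, drift, ep]
  rw [symplecticForm_apply, fderiv_springEnergy hΦ, hparts, springField_snd, add_dotProduct,
    single_dotProduct, hfst]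
  ring

end Energy

end Ring

/-! ### Brackets around the ring -/

section RingBrackets

/-- The gap `q_i - q_j` between two particles, as a linear functional on the state space. -/
def gap {n : ℕ} (i j : Fin n) : State n →L[ℝ] ℝ :=
  (ContinuousLinearMap.proj (R := ℝ) (φ := fun _ : Fin n => ℝ) i - ContinuousLinearMap.proj j) ∘L
    ContinuousLinearMap.fst ℝ _ _

lemma gap_apply {n : ℕ} (i j : Fin n) (z : State n) : gap i j z = z.1 i - z.1 j := rfl

variable {n : ℕ} [NeZero n] {Φ : ℝ → ℝ}

lemma contDiff_springField (hΦ : ContDiff ℝ ω (deriv Φ)) (c : ℝ) :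
    ContDiff ℝ ω (springField n Φ c) := by
  unfold springField drift
  fun_prop

lemma fderiv_springField (hΦ : ContDiff ℝ ω (deriv Φ)) (c : ℝ) (z w : State n) :
    fderiv ℝ (springField n Φ c) z w = (w.2, fun k =>
      deriv (deriv Φ) (z.1 (k - 1) - z.1 k) * (w.1 (k - 1) - w.1 k) -
      deriv (deriv Φ) (z.1 k - z.1 (k + 1)) * (w.1 k - w.1 (k + 1))) - w.1 0 • ep n 0 := by
  rw [← ((contDiff_springField hΦ c).differentiable (by simp) z).lineDeriv_eq_fderiv]
  refine HasLineDerivAt.lineDeriv ?_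
  have hcoord (a b : ℝ) : HasDerivAt (fun t : ℝ => a + t * b) b 0 := by
    simpa using ((hasDerivAt_id' (0 : ℝ)).mul_const b).const_add a
  have hforce (i j : Fin n) :
      HasDerivAt (fun t : ℝ => deriv Φ ((z.1 i + t * w.1 i) - (z.1 j + t * w.1 j)))
        (deriv (deriv Φ) (z.1 i - z.1 j) * (w.1 i - w.1 j)) 0 :=
    HasDerivAt.comp (h₂ := deriv Φ) 0
      (by simpa using (hΦ.differentiable (by simp) (z.1 i - z.1 j)).hasDerivAt)
      ((hcoord _ _).fun_sub (hcoord _ _))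
  have hspring : HasDerivAt (fun t : ℝ => (c - (z.1 0 + t * w.1 0)) • ep n 0)
      (-w.1 0 • ep n 0) 0 :=
    ((hcoord _ _).const_sub c).smul_const _
  refine (((hasDerivAt_pi.2 fun k => hcoord (z.2 k) (w.2 k)).prodMk (hasDerivAt_pi.2 fun k =>
    (hforce (k - 1) k).fun_sub (hforce k (k + 1)))).fun_add hspring).congr_deriv ?_
  rw [neg_smul, ← sub_eq_add_neg]

lemma lieBracket_ep_springField (hΦ : ContDiff ℝ ω (deriv Φ)) (c : ℝ) (k : Fin n) :
    VectorField.lieBracket ℝ (fun _ => ep n k) (springField n Φ c) = fun _ => eq' n k := by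
  funext z
  simp only [lieBracket_const_left, fderiv_springField hΦ]
  ext j <;> simp [ep, eq']

lemma lieBracket_eq'_springField (hΦ : ContDiff ℝ ω (deriv Φ)) (c : ℝ) (k : Fin n) (z : State n) :
    VectorField.lieBracket ℝ (fun _ => eq' n k) (springField n Φ c) z =
      deriv (deriv Φ) (z.1 (k - 1) - z.1 k) • ep n (k - 1) +
      deriv (deriv Φ) (z.1 k - z.1 (k + 1)) • ep n (k + 1) -
      (deriv (deriv Φ) (z.1 (k - 1) - z.1 k) + deriv (deriv Φ) (z.1 k - z.1 (k + 1)) +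
        (Pi.single k 1 : Fin n → ℝ) 0) • ep n k := by
  simp only [lieBracket_const_left, fderiv_springField hΦ]
  ext j
  · simp [ep, eq']
  · have hsucc : j - 1 = k ↔ j = k + 1 := sub_eq_iff_eq_add
    have hpred : j + 1 = k ↔ j = k - 1 := eq_sub_iff_add_eq.symm
    simp only [ep, eq', Pi.single_apply, hsucc, hpred, Prod.smul_mk, Prod.mk_add_mk,
      Prod.mk_sub_mk, Pi.add_apply, Pi.sub_apply, Pi.smul_apply, smul_eq_mul]
    grind

variable {Q : State n → Submodule ℝ (State n) → Prop}

lemma isLieTangent_ep_zero (hQ : ∀ c, IsLieTangent Q (springField n Φ c)) :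
    IsLieTangent Q fun _ => ep n 0 := by
  convert! (hQ 1).sub (hQ 0) using 1
  funext z
  simp only [springField, Pi.sub_apply]
  module

lemma IsLieTangent.eq'_of_ep (hΦ : ContDiff ℝ ω (deriv Φ)) {c : ℝ}
    (hQ : IsLieTangent Q (springField n Φ c)) {k : Fin n} (hk : IsLieTangent Q fun _ => ep n k) :
    IsLieTangent Q fun _ => eq' n k :=
  lieBracket_ep_springField hΦ c k ▸ hk.lieBracket hQ

/-- Up to a multiple of `∂/∂p_k`, the bracket of `∂/∂q_k` with the field is the linearized pair of
forces felt by the two neighbours of particle `k`. -/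
lemma IsLieTangent.neighbour_forces (hΦ : ContDiff ℝ ω (deriv Φ)) {c : ℝ}
    (hQ : IsLieTangent Q (springField n Φ c)) {k : Fin n} (hk : IsLieTangent Q fun _ => ep n k) :
    IsLieTangent Q fun z => deriv (deriv Φ) (gap (k - 1) k z) • ep n (k - 1) +
      deriv (deriv Φ) (gap k (k + 1) z) • ep n (k + 1) := by
  have : ContDiff ℝ ω (deriv (deriv Φ)) := hΦ.deriv'
  have hmul := hk.smul (f := fun z => deriv (deriv Φ) (gap (k - 1) k z) +
    deriv (deriv Φ) (gap k (k + 1) z) + (Pi.single k 1 : Fin n → ℝ) 0) (by fun_prop)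
  convert! ((hQ.eq'_of_ep hΦ hk).lieBracket hQ).add hmul using 1
  funext z
  rw [Pi.add_apply, lieBracket_eq'_springField hΦ]
  simp only [gap_apply, sub_add_cancel]

lemma IsLieTangent.ep_succ (hΦ : ContDiff ℝ ω (deriv Φ))
    (hasym : IsReflectionAsymmetric (deriv (deriv Φ))) {c : ℝ}
    (hQ : IsLieTangent Q (springField n Φ c)) {k : Fin n} (hk : IsLieTangent Q fun _ => ep n k) :
    IsLieTangent Q fun _ => ep n (k + 1) := by
  by_cases hone : (1 : Fin n) = 0
  · simpa [hone] using hk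
  · refine (IsLieTangent.of_smul_add_smul (hΦ.deriv') hasym ?_ ?_ (hQ.eq'_of_ep hΦ hk)
      (hQ.neighbour_forces hΦ hk)).2 <;> simp [gap_apply, eq', hone]

open scoped Fin.CommRing in
lemma isLieTangent_ep (hΦ : ContDiff ℝ ω (deriv Φ))
    (hasym : IsReflectionAsymmetric (deriv (deriv Φ)))
    (hQ : ∀ c, IsLieTangent Q (springField n Φ c)) (k : Fin n) :
    IsLieTangent Q fun _ => ep n k := by
  have hcast (j : ℕ) : IsLieTangent Q fun _ => ep n (j : Fin n) := by
    induction j with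
    | zero => simpa using isLieTangent_ep_zero hQ
    | succ j ih => simpa using (hQ 0).ep_succ hΦ hasym ih
  simpa using hcast k.val

lemma eq_sum_smul_eq'_add_sum_smul_ep (z : State n) :
    z = ∑ k, z.1 k • eq' n k + ∑ k, z.2 k • ep n k := by
  ext j <;> simp [ep, eq', Prod.fst_sum, Prod.snd_sum, Finset.sum_apply, Pi.single_apply]

theorem isBracketGenerating_springField (hΦ : ContDiff ℝ ω (deriv Φ))
    (hasym : IsReflectionAsymmetric (deriv (deriv Φ))) :
    IsBracketGenerating (springField n Φ) := by
  refine fun Q hQ z V hV => eq_top_iff.2 fun w _ => ?_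
  have hep := isLieTangent_ep hΦ hasym hQ
  rw [eq_sum_smul_eq'_add_sum_smul_ep w]
  exact V.add_mem
    (V.sum_mem fun k _ => V.smul_mem _ (((hQ 0).eq'_of_ep hΦ (hep k)).isTangentTo hV))
    (V.sum_mem fun k _ => V.smul_mem _ ((hep k).isTangentTo hV))

theorem exists_reachable_springField (hadm : Admissible Φ) (hgen : Generic Φ) :
    ∃ φ : ℝ → Flow ℝ (State n),
      (∀ c, IsFlowOf (springField n Φ c) (φ c)) ∧ ∀ x y, Reachable φ x y := by
  obtain ⟨hanalytic, hbdd, htop⟩ := hadm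
  have hΦ : ContDiff ℝ ω Φ := contDiff_omega_iff_analyticOnNhd.2 fun x _ => hanalytic x
  have hdiff : Differentiable ℝ Φ := hΦ.differentiable (by simp)
  have hΦ' : ContDiff ℝ ω (deriv Φ) := hΦ.deriv'
  exact (isBracketGenerating_springField hΦ' hgen).exists_reachable_of_isHamiltonian
    (contDiff_springField hΦ') isAlt_symplecticForm nondegenerate_symplecticForm
    (differentiable_springEnergy hdiff) (isBounded_springEnergy_le hbdd htop)
    (isHamiltonian_springField hdiff)

end RingBrackets

/-! ### Concatenation of controlled trajectories -/

section Steering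

variable {E ι : Type*} [NormedAddCommGroup E] [NormedSpace ℝ E] {f : E → E} {g x y z : E}

/-- `y` is reached from `x` in positive time along a continuous solution, in integral form, of the
control system `x' = f(x) + u(t) g` with a bounded measurable control `u`. -/
def Steerable (f : E → E) (g x y : E) : Prop :=
  ∃ (θ : ℝ) (u : ℝ → ℝ) (X : ℝ → E), 0 < θ ∧ Measurable u ∧ (∃ C, ∀ t ∈ Icc 0 θ, |u t| ≤ C) ∧
    Continuous X ∧ (∀ t ∈ Icc 0 θ, X t = X 0 + ∫ s in (0 : ℝ)..t, (f (X s) + u s • g)) ∧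
    X 0 = x ∧ X θ = y

lemma intervalIntegrable_controlled {θ : ℝ} {u : ℝ → ℝ} {X : ℝ → E} (hf : Continuous f)
    (hθ : 0 ≤ θ) (hu : Measurable u) (hC : ∃ C, ∀ t ∈ Icc 0 θ, |u t| ≤ C) (hX : Continuous X) :
    IntervalIntegrable (fun s => f (X s) + u s • g) volume 0 θ := by
  obtain ⟨C, hC⟩ := hC
  have hu' : IntegrableOn u (Icc 0 θ) :=
    .of_bound measure_Icc_lt_top hu.aestronglyMeasurable C
      ((ae_restrict_iff' measurableSet_Icc).2 (.of_forall hC))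
  exact ((hf.comp hX).intervalIntegrable 0 θ).add
    ((intervalIntegrable_iff_integrableOn_Icc_of_le hθ).2 (hu'.smul_const g))

lemma IsFlowOf.steerable [CompleteSpace E] {κ : E → ℝ} (hf : Continuous f) (hκ : Continuous κ)
    {φ : Flow ℝ E} (hφ : IsFlowOf (fun z => f z + κ z • g) φ) {t : ℝ} (ht : 0 < t) (x : E) :
    Steerable f g x (φ t x) := by
  have hX : Continuous fun s => φ s x := φ.continuous continuous_id continuous_const
  have hu : Continuous fun s => κ (φ s x) := hκ.comp hX
  refine ⟨t, fun s => κ (φ s x), fun s => φ s x, ht, hu.measurable,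
    isCompact_Icc.exists_bound_of_continuousOn hu.continuousOn, hX, fun s _ => ?_,
    φ.map_zero_apply x, rfl⟩
  have hint : Continuous fun s => f (φ s x) + κ (φ s x) • g :=
    (hf.comp hX).add (hu.smul continuous_const)
  rw [intervalIntegral.integral_eq_sub_of_hasDerivAt (fun τ _ => hφ x τ)
    (hint.intervalIntegrable _ _)]
  abel

/-- The curve `a` up to time `θ`, followed by the curve `b` started at time `θ`. -/
def concat {α : Type*} (θ : ℝ) (a b : ℝ → α) (t : ℝ) : α :=
  if t ≤ θ then a t else b (t - θ)

section Concat

variable {α : Type*} {θ t : ℝ} {a b : ℝ → α}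

lemma concat_of_le (ht : t ≤ θ) : concat θ a b t = a t := if_pos ht

lemma concat_of_lt (ht : θ < t) : concat θ a b t = b (t - θ) := if_neg ht.not_ge

lemma measurable_concat [MeasurableSpace α] (ha : Measurable a) (hb : Measurable b) :
    Measurable (concat θ a b) :=
  Measurable.ite measurableSet_Iic ha (hb.comp (measurable_id.sub_const θ))

lemma continuous_concat [TopologicalSpace α] (ha : Continuous a) (hb : Continuous b)
    (hab : a θ = b 0) : Continuous (concat θ a b) :=
  ha.if_le (hb.comp (continuous_sub_right θ)) continuous_id continuous_const <| by
    rintro t rfl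
    simpa using hab

variable {a b : ℝ → E}

lemma integral_concat_of_le (hθ : 0 ≤ θ) (ht : t ≤ θ) :
    ∫ s in (0 : ℝ)..t, concat θ a b s = ∫ s in (0 : ℝ)..t, a s :=
  intervalIntegral.integral_congr fun _ hs => concat_of_le (hs.2.trans (sup_le hθ ht))

lemma integral_concat_of_ge (hθ : 0 ≤ θ) (ht : θ ≤ t) (ha : IntervalIntegrable a volume 0 θ)
    (hb : IntervalIntegrable b volume 0 (t - θ)) :
    ∫ s in (0 : ℝ)..t, concat θ a b s =
      (∫ s in (0 : ℝ)..θ, a s) + ∫ s in (0 : ℝ)..t - θ, b s := by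
  have hfst : IntervalIntegrable (concat θ a b) volume 0 θ := by
    refine ha.congr fun s hs => (concat_of_le ?_).symm
    exact (uIoc_of_le hθ ▸ hs).2
  have hright : EqOn (fun s => b (s - θ)) (concat θ a b) (uIoc θ t) := fun s hs =>
    (concat_of_lt (uIoc_of_le ht ▸ hs).1).symm
  have hsnd : IntervalIntegrable (concat θ a b) volume θ t := by
    simpa using (hb.comp_sub_right θ).congr (by simpa using hright)
  have hshift : ∫ s in θ..t, concat θ a b s = ∫ s in (0 : ℝ)..t - θ, b s := by
    rw [← sub_self θ, ← intervalIntegral.integral_comp_sub_right]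
    exact intervalIntegral.integral_congr_ae (.of_forall fun s hs => (hright hs).symm)
  rw [← intervalIntegral.integral_add_adjacent_intervals hfst hsnd, hshift,
    integral_concat_of_le hθ le_rfl]

end Concat

lemma Steerable.trans (hf : Continuous f) (hxy : Steerable f g x y) (hyz : Steerable f g y z) :
    Steerable f g x z := by
  obtain ⟨θ₁, u₁, X₁, hθ₁, hu₁, hC₁, hX₁, hint₁, rfl, rfl⟩ := hxy
  obtain ⟨θ₂, u₂, X₂, hθ₂, hu₂, hC₂, hX₂, hint₂, hjoin, rfl⟩ := hyz
  have hX₁0 : concat θ₁ X₁ X₂ 0 = X₁ 0 := concat_of_le hθ₁.le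
  have hv (s : ℝ) : f (concat θ₁ X₁ X₂ s) + concat θ₁ u₁ u₂ s • g =
      concat θ₁ (fun s => f (X₁ s) + u₁ s • g) (fun s => f (X₂ s) + u₂ s • g) s := by
    unfold concat
    split_ifs <;> rfl
  have hv₁ := intervalIntegrable_controlled (g := g) hf hθ₁.le hu₁ hC₁ hX₁
  have hv₂ := intervalIntegrable_controlled (g := g) hf hθ₂.le hu₂ hC₂ hX₂
  refine ⟨θ₁ + θ₂, concat θ₁ u₁ u₂, concat θ₁ X₁ X₂, add_pos hθ₁ hθ₂, measurable_concat hu₁ hu₂,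
    ?_, continuous_concat hX₁ hX₂ hjoin.symm, fun t ht => ?_, hX₁0, ?_⟩
  · obtain ⟨C₁, hC₁⟩ := hC₁
    obtain ⟨C₂, hC₂⟩ := hC₂
    refine ⟨max C₁ C₂, fun t ht => ?_⟩
    rcases le_or_gt t θ₁ with htθ | htθ
    · exact concat_of_le (a := u₁) htθ ▸ (hC₁ t ⟨ht.1, htθ⟩).trans (le_max_left _ _)
    · exact concat_of_lt (b := u₂) htθ ▸
        (hC₂ _ ⟨sub_nonneg.2 htθ.le, sub_le_iff_le_add'.2 ht.2⟩).trans (le_max_right _ _)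
  · simp only [hv, hX₁0]
    rcases le_or_gt t θ₁ with htθ | htθ
    · rw [concat_of_le htθ, integral_concat_of_le hθ₁.le htθ, ← hint₁ t ⟨ht.1, htθ⟩]
    · have ht₂ : t - θ₁ ∈ Icc 0 θ₂ := ⟨sub_nonneg.2 htθ.le, sub_le_iff_le_add'.2 ht.2⟩
      rw [concat_of_lt htθ, integral_concat_of_ge hθ₁.le htθ.le hv₁
        (hv₂.mono_set (uIcc_subset_uIcc_left (Icc_subset_uIcc ht₂))), ← add_assoc,
        ← hint₁ θ₁ ⟨hθ₁.le, le_rfl⟩, ← hjoin, ← hint₂ _ ht₂]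
  · rw [concat_of_lt (lt_add_of_pos_right _ hθ₂), add_sub_cancel_left]

lemma Steerable.of_reachable (hf : Continuous f) {φ : ι → Flow ℝ E}
    (hφ : ∀ i, ∀ t > 0, ∀ x, Steerable f g x (φ i t x)) (hxy : Steerable f g x y)
    (hyz : Reachable φ y z) : Steerable f g x z := by
  induction hyz with
  | refl => exact hxy
  | tail _ hstep ih =>
    obtain ⟨i, t, ht, rfl⟩ := hstep
    exact ih.trans hf (hφ i t ht _)

end Steering

/-! ### Global controllability -/

lemma continuous_drift {n : ℕ} [NeZero n] {Φ : ℝ → ℝ} (hΦ : Continuous (deriv Φ)) :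
    Continuous (drift n Φ) := by
  unfold drift
  fun_prop

theorem single_force_global_controllability_general
    (n : ℕ) [NeZero n] (Φ : ℝ → ℝ) (hadm : Admissible Φ) (hgen : Generic Φ)
    (xtil xhat : State n) :
    ∃ (θ : ℝ) (u : ℝ → ℝ) (x : ℝ → State n),
      0 < θ ∧ Measurable u ∧
      (∃ C : ℝ, ∀ᵐ t : ℝ ∂volume, t ∈ Set.Icc (0:ℝ) θ → |u t| ≤ C) ∧
      IsTrajectory n Φ θ u x ∧ x 0 = xtil ∧ x θ = xhat := by
  have hdrift : Continuous (drift n Φ) :=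
    continuous_drift (continuous_iff_continuousAt.2 fun y => (hadm.1 y).deriv.continuousAt)
  obtain ⟨φ, hφ, hreach⟩ := exists_reachable_springField (n := n) hadm hgen
  have hstep (c t : ℝ) (ht : t > 0) (x : State n) : Steerable (drift n Φ) (ep n 0) x (φ c t x) :=
    (hφ c).steerable (κ := fun z => c - z.1 0) hdrift (by fun_prop) ht x
  obtain ⟨θ, u, x, hθ, hu, ⟨C, hC⟩, hx, hint, hx0, hxθ⟩ :=
    Steerable.of_reachable hdrift hstep (hstep 0 1 one_pos xtil) (hreach _ xhat)
  exact ⟨θ, u, x, hθ, hu, ⟨C, .of_forall hC⟩, ⟨hx.continuousOn, hint⟩, hx0, hxθ⟩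

/-- Global controllability of the single forced periodic multiparticle system. -/
theorem single_force_global_controllability
    (n : ℕ) [NeZero n] (hn : 3 ≤ n) (Φ : ℝ → ℝ)
    (hadm : Admissible Φ) (hgen : Generic Φ)
    (xtil xhat : State n) :
    ∃ (θ : ℝ) (u : ℝ → ℝ) (x : ℝ → State n),
      0 < θ ∧ Measurable u ∧
      (∃ C : ℝ, ∀ᵐ t : ℝ ∂volume, t ∈ Set.Icc (0:ℝ) θ → |u t| ≤ C) ∧
      IsTrajectory n Φ θ u x ∧ x 0 = xtil ∧ x θ = xhat :=
  single_force_global_controllability_general n Φ hadm hgen xtil xhat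
end
end

section
/- Iterated Lie bracket formulas for the single forced periodic multiparticle system: Assume Φ is three times continuously differentiable. Then, with e_{q_k} and e_{p_k} denoting the constant coordinate vector fields ∂/∂q_k and ∂/∂p_k: (i) ad f g = [f,g] = −e_{q₁}; (ii) ad²f g = [f,[f,g]] equals the vector field x ↦ φ′(q₁−q₂)(e_{p₂} − e_{p₁}) + φ′(qₙ−q₁)(e_{pₙ} − e_{p₁}); (iii) [ad²f g, ad f g] equals the vector field x ↦ φ″(q₁−q₂)(e_{p₂} − e_{p₁}) − φ″(qₙ−q₁)(e_{pₙ} − e_{p₁}). -/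
/-!
Summed over springs instead of particles, the drift is
`f = ∑ p_k ∂/∂q_k + ∑ φ(q_k - q_{k+1}) (e_{p_{k+1}} - e_{p_k})`, so its nonlinear part consists of
constant vectors with coefficients of the form `φ ∘ ℓ`, `ℓ` linear. Bracketing with a constant
field is, up to sign, directional differentiation. Hence `[f, e_{p_j}] = -e_{q_j}`, since momenta
enter `f` only through the kinematic part. The second bracket is `Df·e_{q_j}` and the third is
`D(ad²f g)·e_{q_j}`; only the two springs attached to the forced particle `j` change length along
`e_{q_j}`, one at rate `1` and the other at rate `-1`, which accounts for the final sign.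
-/

open scoped BigOperators
open MeasureTheory Filter Set

noncomputable section

lemma hasFDerivAt_comp_clm_smul {E F : Type*} [NormedAddCommGroup E] [NormedSpace ℝ E]
    [NormedAddCommGroup F] [NormedSpace ℝ F] {φ : ℝ → ℝ} (ℓ : E →L[ℝ] ℝ) {x : E}
    (hφ : DifferentiableAt ℝ φ (ℓ x)) (w : F) :
    HasFDerivAt (fun y => φ (ℓ y) • w) ((deriv φ (ℓ x) • ℓ).smulRight w) x :=
  (hφ.hasDerivAt.comp_hasFDerivAt x ℓ.hasFDerivAt).smul_const w

section lieBracket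

variable {n : ℕ} (X : State n → State n) (v : State n)

lemma lieBracket_const_right : lieBracket X (fun _ => v) = fun x => -fderiv ℝ X x v := by
  funext x
  simp [lieBracket]

lemma lieBracket_const_neg_right : lieBracket X (fun _ => -v) = fun x => fderiv ℝ X x v := by
  simp [lieBracket_const_right]

end lieBracket

/-- The linear functional `(q, p) ↦ q_i - q_j`, whose value is the argument of the force between
particles `i` and `j`. -/
def posDiff {n : ℕ} (i j : Fin n) : State n →L[ℝ] ℝ :=
  (ContinuousLinearMap.proj (R := ℝ) (φ := fun _ => ℝ) i - ContinuousLinearMap.proj j).comp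
    (ContinuousLinearMap.fst ℝ (Fin n → ℝ) (Fin n → ℝ))

lemma posDiff_apply {n : ℕ} (i j : Fin n) (x : State n) : posDiff i j x = x.1 i - x.1 j := rfl

section periodic

variable {n : ℕ} [NeZero n]

lemma posDiff_ep (i j k : Fin n) : posDiff i j (ep n k) = 0 := by
  simp [posDiff_apply, ep]

lemma posDiff_add_one_eq' (j k : Fin n) :
    posDiff k (k + 1) (eq' n j) = (if k = j then 1 else 0) - if k = j - 1 then 1 else 0 := by
  simp only [posDiff_apply, eq', Pi.single_apply, eq_sub_iff_add_eq]

lemma posDiff_eq'_left_smul_ep_sub (j k : Fin n) :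
    posDiff j k (eq' n j) • (ep n k - ep n j) = ep n k - ep n j := by
  obtain rfl | hkj := eq_or_ne k j
  · simp
  · simp [posDiff_apply, eq', hkj]

lemma posDiff_eq'_right_smul_ep_sub (j k : Fin n) :
    posDiff k j (eq' n j) • (ep n k - ep n j) = -(ep n k - ep n j) := by
  have hswap : posDiff k j (eq' n j) = -posDiff j k (eq' n j) := (neg_sub _ _).symm
  rw [hswap, neg_smul, posDiff_eq'_left_smul_ep_sub]

variable {Φ : ℝ → ℝ}

lemma drift_eq_add_sum (x : State n) :
    drift n Φ x =
      (x.2, 0) + ∑ k, deriv Φ (posDiff k (k + 1) x) • (ep n (k + 1) - ep n k) := by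
  refine Prod.ext ?_ (funext fun i => ?_)
  · simp [drift, ep, Prod.fst_sum]
  · simp [drift, ep, Prod.snd_sum, Pi.single_apply, posDiff_apply, mul_sub,
      Finset.sum_sub_distrib, ← sub_eq_iff_eq_add]

lemma fderiv_drift_apply (hφ : Differentiable ℝ (deriv Φ)) (x v : State n) :
    fderiv ℝ (drift n Φ) x v = (v.2, 0) +
      ∑ k, (deriv (deriv Φ) (posDiff k (k + 1) x) * posDiff k (k + 1) v) •
        (ep n (k + 1) - ep n k) := by
  have hkinematic : HasFDerivAt (fun y : State n => ((y.2, 0) : State n))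
      ((ContinuousLinearMap.snd ℝ _ _).prod 0) x :=
    hasFDerivAt_snd.prodMk (hasFDerivAt_const 0 x)
  have hsprings := HasFDerivAt.fun_sum (u := Finset.univ) fun (k : Fin n) _ =>
    hasFDerivAt_comp_clm_smul (posDiff k (k + 1)) (hφ _) (x := x) (ep n (k + 1) - ep n k)
  rw [funext drift_eq_add_sum, (hkinematic.fun_add hsprings).fderiv]
  simp

lemma fderiv_drift_ep (hφ : Differentiable ℝ (deriv Φ)) (j : Fin n) (x : State n) :
    fderiv ℝ (drift n Φ) x (ep n j) = eq' n j := by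
  simp only [fderiv_drift_apply hφ, posDiff_ep, mul_zero, zero_smul, Finset.sum_const_zero,
    add_zero]
  rfl

lemma fderiv_drift_eq' (hφ : Differentiable ℝ (deriv Φ)) (j : Fin n) (x : State n) :
    fderiv ℝ (drift n Φ) x (eq' n j) =
      deriv (deriv Φ) (x.1 j - x.1 (j + 1)) • (ep n (j + 1) - ep n j) +
        deriv (deriv Φ) (x.1 (j - 1) - x.1 j) • (ep n (j - 1) - ep n j) := by
  have hkinematic : ((eq' n j).2, 0) = (0 : State n) := rfl
  simp only [fderiv_drift_apply hφ, hkinematic, zero_add, posDiff_add_one_eq']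
  simp only [posDiff_apply, mul_sub, mul_ite, mul_one, mul_zero, sub_smul, ite_smul, zero_smul,
    Finset.sum_sub_distrib, Finset.sum_ite_eq', Finset.mem_univ, if_true, sub_add_cancel]
  module

lemma lieBracket_drift_ep (hφ : Differentiable ℝ (deriv Φ)) (j : Fin n) :
    lieBracket (drift n Φ) (fun _ => ep n j) = fun _ => -eq' n j := by
  simp only [lieBracket_const_right, fderiv_drift_ep hφ]

lemma lieBracket_drift_lieBracket_drift_ep (hφ : Differentiable ℝ (deriv Φ)) (j : Fin n) :
    lieBracket (drift n Φ) (lieBracket (drift n Φ) (fun _ => ep n j)) = fun x =>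
      deriv (deriv Φ) (x.1 j - x.1 (j + 1)) • (ep n (j + 1) - ep n j) +
        deriv (deriv Φ) (x.1 (j - 1) - x.1 j) • (ep n (j - 1) - ep n j) := by
  simp only [lieBracket_drift_ep hφ, lieBracket_const_neg_right, fderiv_drift_eq' hφ]

lemma fderiv_comp_posDiff_smul_add_eq' {ψ : ℝ → ℝ} (hψ : Differentiable ℝ ψ)
    (i j k : Fin n) (x : State n) :
    fderiv ℝ (fun y : State n =>
        ψ (y.1 j - y.1 k) • (ep n k - ep n j) + ψ (y.1 i - y.1 j) • (ep n i - ep n j))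
        x (eq' n j) =
      deriv ψ (x.1 j - x.1 k) • (ep n k - ep n j) -
        deriv ψ (x.1 i - x.1 j) • (ep n i - ep n j) := by
  have h := (hasFDerivAt_comp_clm_smul (posDiff j k) (hψ _) (ep n k - ep n j)).fun_add
    (hasFDerivAt_comp_clm_smul (x := x) (posDiff i j) (hψ _) (ep n i - ep n j))
  simp only [posDiff_apply] at h
  rw [h.fderiv]
  simp only [add_apply, ContinuousLinearMap.smulRight_apply, smul_apply, smul_assoc,
    posDiff_eq'_left_smul_ep_sub, posDiff_eq'_right_smul_ep_sub, smul_neg, ← sub_eq_add_neg]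

/-- The two regularity hypotheses together say that `Φ` is three times differentiable. -/
theorem iterated_brackets_general (hΦ : ContDiff ℝ 2 Φ)
    (hΦ'' : Differentiable ℝ (deriv (deriv Φ))) (j : Fin n) :
    (∀ x : State n, lieBracket (drift n Φ) (fun _ => ep n j) x = -eq' n j) ∧
    (∀ x : State n,
      lieBracket (drift n Φ) (lieBracket (drift n Φ) (fun _ => ep n j)) x =
        deriv (deriv Φ) (x.1 j - x.1 (j + 1)) • (ep n (j + 1) - ep n j) +
        deriv (deriv Φ) (x.1 (j - 1) - x.1 j) • (ep n (j - 1) - ep n j)) ∧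
    (∀ x : State n,
      lieBracket (lieBracket (drift n Φ) (lieBracket (drift n Φ) (fun _ => ep n j)))
        (lieBracket (drift n Φ) (fun _ => ep n j)) x =
        deriv (deriv (deriv Φ)) (x.1 j - x.1 (j + 1)) • (ep n (j + 1) - ep n j) -
        deriv (deriv (deriv Φ)) (x.1 (j - 1) - x.1 j) • (ep n (j - 1) - ep n j)) := by
  have hφ : Differentiable ℝ (deriv Φ) := hΦ.differentiable_deriv_two
  refine ⟨congrFun (lieBracket_drift_ep hφ j),
    congrFun (lieBracket_drift_lieBracket_drift_ep hφ j), fun x => ?_⟩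
  rw [lieBracket_drift_lieBracket_drift_ep hφ, lieBracket_drift_ep hφ,
    lieBracket_const_neg_right]
  exact fderiv_comp_posDiff_smul_add_eq' hΦ'' (j - 1) j (j + 1) x

end periodic

/-- Iterated Lie bracket formulas for the single forced periodic
multiparticle system (with `f = drift`, `g = ∂/∂p₁`, `φ = Φ'`). -/
theorem iterated_brackets (n : ℕ) [NeZero n] (hn : 3 ≤ n) (Φ : ℝ → ℝ)
    (hΦ : ContDiff ℝ 3 Φ) :
    (∀ x : State n, lieBracket (drift n Φ) (fun _ => ep n 0) x = - eq' n 0) ∧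
    (∀ x : State n,
      lieBracket (drift n Φ) (lieBracket (drift n Φ) (fun _ => ep n 0)) x =
        deriv (deriv Φ) (x.1 0 - x.1 1) • (ep n 1 - ep n 0) +
        deriv (deriv Φ) (x.1 (-1) - x.1 0) • (ep n (-1) - ep n 0)) ∧
    (∀ x : State n,
      lieBracket (lieBracket (drift n Φ) (lieBracket (drift n Φ) (fun _ => ep n 0)))
        (lieBracket (drift n Φ) (fun _ => ep n 0)) x =
        deriv (deriv (deriv Φ)) (x.1 0 - x.1 1) • (ep n 1 - ep n 0) -
        deriv (deriv (deriv Φ)) (x.1 (-1) - x.1 0) • (ep n (-1) - ep n 0)) := by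
  have hΦ'' : Differentiable ℝ (deriv (deriv Φ)) :=
    ContDiff.differentiable_deriv_two (ContDiff.deriv' (n := 2) hΦ)
  simpa only [zero_add, zero_sub] using
    iterated_brackets_general (n := n) (hΦ.of_le (by norm_num)) hΦ'' 0
end
end
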